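/- Let C_n be a vertex-weighted oriented n-cycle with all weights at least 2. Then for every t ≥ 1: reg(I(C_n)^t) = reg(I(C_n)) + (t−1)(w+1), where w = max{w(x) : x ∈ V(C_n)}. -/

import Mathlib

open MvPolynomial

noncomputable section

namespace PaperReg

variable (k : Type) [Field k] (σ : Type)

/-- A graded free resolution of a homogeneous ideal `I` of `MvPolynomial σ k`:
finite-rank free modules `Fin (rk i) →₀ S` with basis elements of degrees `deg i`,
degree-preserving differentials, exact, augmented onto `I`. -/
structure GradedFreeRes (I : Ideal (MvPolynomial σ k)) where
  rk : ℕ → ℕ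
  deg : (i : ℕ) → Fin (rk i) → ℕ
  aug : (Fin (rk 0) →₀ MvPolynomial σ k) →ₗ[MvPolynomial σ k] MvPolynomial σ k
  d : (i : ℕ) →
    ((Fin (rk (i + 1)) →₀ MvPolynomial σ k) →ₗ[MvPolynomial σ k] (Fin (rk i) →₀ MvPolynomial σ k))
  aug_range : LinearMap.range aug = I
  exact_zero : LinearMap.range (d 0) = LinearMap.ker aug
  exact_succ : ∀ i, LinearMap.range (d (i + 1)) = LinearMap.ker (d i)
  aug_graded : ∀ b, (aug (Finsupp.single b 1)).IsHomogeneous (deg 0 b)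
  d_graded : ∀ i b c, (d i (Finsupp.single b 1)) c = 0 ∨
    ∃ m, deg (i + 1) b = deg i c + m ∧ ((d i (Finsupp.single b 1)) c).IsHomogeneous m

/-- The `(i,j)`-th graded Betti number of `I`: the minimal number of degree-`j` basis
elements in homological position `i`, over all graded free resolutions of `I`
(achieved by the minimal graded free resolution). -/
def betti (I : Ideal (MvPolynomial σ k)) (i j : ℕ) : ℕ :=
  sInf { r | ∃ F : GradedFreeRes k σ I,
    r = (Finset.univ.filter (fun b => F.deg i b = j)).card }

/-- Castelnuovo–Mumford regularity: `reg I = max { j - i | betti I i j ≠ 0 }`. -/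
def reg (I : Ideal (MvPolynomial σ k)) : ℕ :=
  sSup { r | ∃ i j : ℕ, betti k σ I i j ≠ 0 ∧ r = j - i }

/-- The monic monomial with exponent vector `a`. -/
def mon (a : σ →₀ ℕ) : MvPolynomial σ k := monomial a 1

/-- `I` is a monomial ideal. -/
def IsMonomialIdeal (I : Ideal (MvPolynomial σ k)) : Prop :=
  ∃ A : Set (σ →₀ ℕ), I = Ideal.span (mon k σ '' A)

/-- The exponent vectors of the unique minimal set of monomial generators of a
monomial ideal: monomials of `I` minimal with respect to divisibility. -/
def minGens (I : Ideal (MvPolynomial σ k)) : Set (σ →₀ ℕ) :=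
  { a | mon k σ a ∈ I ∧ ∀ b : σ →₀ ℕ, mon k σ b ∈ I → b ≤ a → b = a }

/-- The support of a monomial ideal: variables appearing in its minimal generators. -/
def isupp (I : Ideal (MvPolynomial σ k)) : Set σ :=
  ⋃ a ∈ minGens k σ I, ↑a.support

variable (n : ℕ) [NeZero n]

/-- The exponent vector of the `i`-th generator `L_i = x_{i-1} x_i ^ (w i)` of the
edge ideal of the vertex-weighted oriented `n`-cycle (indices mod `n`). -/
def cycE (w : Fin n → ℕ) (i : Fin n) : Fin n →₀ ℕ :=
  Finsupp.single (i - 1) 1 + Finsupp.single i (w i)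

/-- The generator `L_i = x_{i-1} x_i ^ (w i)`. -/
def cycL (w : Fin n → ℕ) (i : Fin n) : MvPolynomial (Fin n) k :=
  monomial (cycE n w i) (1 : k)

/-- The edge ideal of the vertex-weighted oriented `n`-cycle with weights `w`. -/
def cycIdeal (w : Fin n → ℕ) : Ideal (MvPolynomial (Fin n) k) :=
  Ideal.span (Set.range (cycL k n w))

/-!
Both sides are computed by `reg (I ^ t) = ∑ i, (w i - 1) + (t - 1) * (max w + 1) + 1`.

For the upper bound, order the generators of `I ^ t` as products `∏ i, L_i ^ c i` by the
colexicographic order of the multiplicities `c`, and add them one at a time, largest first. Each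
step is governed by the colon ideal of the products already present by the new one. Its minimal
generators can be chosen below an explicit vector of exponents close to `w`, and the monomials below
that vector which avoid the colon ideal have degree at most `∑ i, (w i - 1) - w f`, where `f` is the
first index with `c f ≠ 0`; this balances the degree of the new generator.

For the lower bound, let `m` have the largest weight. The monomial
`(∏ i, x_i ^ (w i - 1)) * L_m ^ (t - 1)` lies outside `I ^ t`, but all its multiples by variables
lie inside. Such a socle element forces the top syzygy module of `I ^ t` to have a generator in the
expected degree.
-/

section Gradings

variable {k : Type} [CommRing k] {σ : Type}

/-- The grading of the polynomial ring by total degree, as a family of additive subgroups. -/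
def polyGrading (e : ℕ) : AddSubgroup (MvPolynomial σ k) :=
  (homogeneousSubmodule σ k e).toAddSubgroup

/-- The grading of a free module over the polynomial ring in which the basis element `b` has
degree `deg b`. -/
def freeGrading {ι : Type} (deg : ι → ℕ) (e : ℕ) : AddSubgroup (ι →₀ MvPolynomial σ k) where
  carrier := {f | ∀ b s, coeff s (f b) ≠ 0 → s.degree + deg b = e}
  add_mem' := by
    intro f g hf hg b s h
    by_cases h1 : coeff s (f b) = 0
    · exact hg b s (by simpa [h1] using h)
    · exact hf b s h1
  zero_mem' := by simp
  neg_mem' := by simp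

/-- The grading induced on a submodule by a grading of the ambient module. -/
def inducedGrading {M : Type} [AddCommGroup M] [Module (MvPolynomial σ k) M]
    (𝓜 : ℕ → AddSubgroup M) (N : Submodule (MvPolynomial σ k) M) (e : ℕ) : AddSubgroup N :=
  (𝓜 e).comap N.subtype.toAddMonoidHom

variable (k σ) in
/-- Compatibility of a grading of a module with the grading of the polynomial ring. -/
def IsGradedModule {M : Type} [AddCommGroup M] [Module (MvPolynomial σ k) M]
    (𝓜 : ℕ → AddSubgroup M) : Prop :=
  ∀ ⦃d e : ℕ⦄ ⦃p : MvPolynomial σ k⦄ ⦃x : M⦄,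
    p.IsHomogeneous d → x ∈ 𝓜 e → p • x ∈ 𝓜 (d + e)

theorem mem_freeGrading_iff {ι : Type} {deg : ι → ℕ} {e : ℕ} {f : ι →₀ MvPolynomial σ k} :
    f ∈ freeGrading deg e ↔ ∀ b s, coeff s (f b) ≠ 0 → s.degree + deg b = e :=
  Iff.rfl

theorem isHomogeneous_iff_forall_coeff {p : MvPolynomial σ k} {d : ℕ} :
    p.IsHomogeneous d ↔ ∀ s, coeff s p ≠ 0 → s.degree = d := by
  simp only [IsHomogeneous, IsWeightedHomogeneous, Finsupp.degree_eq_weight_one]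
  rfl

theorem single_mem_freeGrading {ι : Type} (deg : ι → ℕ) {d : ℕ} {b : ι} {p : MvPolynomial σ k}
    (hp : p.IsHomogeneous d) : Finsupp.single b p ∈ freeGrading deg (d + deg b) := by
  classical
  intro c s h
  obtain rfl : b = c := by
    by_contra hbc
    simp [Finsupp.single_eq_of_ne (Ne.symm hbc)] at h
  rw [Finsupp.single_eq_same] at h
  rw [isHomogeneous_iff_forall_coeff.1 hp s h]

theorem basis_mem_freeGrading {ι : Type} (deg : ι → ℕ) (b : ι) :
    (Finsupp.single b 1 : ι →₀ MvPolynomial σ k) ∈ freeGrading deg (deg b) := by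
  simpa using single_mem_freeGrading deg (b := b) (isHomogeneous_one σ k)

theorem isHomogeneous_apply_of_mem_freeGrading {ι : Type} {deg : ι → ℕ} {e : ℕ}
    {f : ι →₀ MvPolynomial σ k} (hf : f ∈ freeGrading deg e) (b : ι) :
    f b = 0 ∨ ∃ m, m + deg b = e ∧ (f b).IsHomogeneous m := by
  refine or_iff_not_imp_left.2 fun h => ?_
  obtain ⟨s, hs⟩ := ne_zero_iff.1 h
  refine ⟨s.degree, hf b s hs, isHomogeneous_iff_forall_coeff.2 fun s' hs' => ?_⟩
  have h1 := hf b s hs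
  have h2 := hf b s' hs'
  omega

theorem isGradedModule_polyGrading :
    IsGradedModule k σ (M := MvPolynomial σ k) polyGrading :=
  fun _ _ _ _ hp hx => hp.mul hx

theorem isGradedModule_freeGrading {ι : Type} (deg : ι → ℕ) :
    IsGradedModule k σ (M := ι →₀ MvPolynomial σ k) (freeGrading deg) := by
  intro d e p f hp hf b s hs
  rcases isHomogeneous_apply_of_mem_freeGrading hf b with h0 | ⟨m, rfl, hm⟩
  · simp [h0] at hs
  · rw [isHomogeneous_iff_forall_coeff.1 (hp.mul hm) s hs, add_assoc]

theorem IsGradedModule.induced {M : Type} [AddCommGroup M] [Module (MvPolynomial σ k) M]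
    {𝓜 : ℕ → AddSubgroup M} (h : IsGradedModule k σ 𝓜) (N : Submodule (MvPolynomial σ k) M) :
    IsGradedModule k σ (inducedGrading 𝓜 N) :=
  fun _ _ _ _ hp hx => h hp hx

theorem iSupIndep_polyGrading :
    iSupIndep (polyGrading : ℕ → AddSubgroup (MvPolynomial σ k)) := by
  intro e
  rw [AddSubgroup.disjoint_def]
  intro p hp hp'
  have hle : ⨆ (j) (_ : j ≠ e), polyGrading j ≤
      (homogeneousComponent (σ := σ) (R := k) e).toAddMonoidHom.ker :=
    iSup₂_le fun j hj q hq => (homogeneousComponent_of_mem hq).trans (if_neg (Ne.symm hj))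
  calc p = homogeneousComponent e p := by rw [homogeneousComponent_of_mem hp, if_pos rfl]
    _ = 0 := hle hp'

theorem iSupIndep_freeGrading {ι : Type} (deg : ι → ℕ) :
    iSupIndep (freeGrading deg : ℕ → AddSubgroup (ι →₀ MvPolynomial σ k)) := by
  intro e
  rw [AddSubgroup.disjoint_def]
  intro f hf hf'
  let N : AddSubgroup (ι →₀ MvPolynomial σ k) :=
    { carrier := {g | ∀ b s, s.degree + deg b = e → coeff s (g b) = 0}
      add_mem' := fun hg hg' b s h => by simp [hg b s h, hg' b s h]
      zero_mem' := by simp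
      neg_mem' := by simp }
  have hle : ⨆ (j) (_ : j ≠ e), freeGrading deg j ≤ N :=
    iSup₂_le fun j hj g hg b s hs => by_contra fun h => hj (by rw [← hg b s h, hs])
  ext b s
  by_contra h
  exact h (hle hf' b s (hf b s h))

theorem iSup_freeGrading {ι : Type} (deg : ι → ℕ) :
    ⨆ e, freeGrading deg e = (⊤ : AddSubgroup (ι →₀ MvPolynomial σ k)) := by
  refine eq_top_iff.2 fun f _ => ?_
  induction f using Finsupp.induction_linear with
  | zero => exact zero_mem _
  | add f g hf hg => exact add_mem (hf trivial) (hg trivial)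
  | single b p =>
    rw [p.as_sum, ← Finsupp.singleAddHom_apply, map_sum]
    exact sum_mem fun s _ => AddSubgroup.mem_iSup_of_mem _
      (single_mem_freeGrading deg (isHomogeneous_monomial _ rfl))

end Gradings

section GradedMaps

variable {k : Type} [CommRing k] {σ : Type}
  {M N : Type} [AddCommGroup M] [Module (MvPolynomial σ k) M]
  [AddCommGroup N] [Module (MvPolynomial σ k) N]
  {𝓜 : ℕ → AddSubgroup M} {𝓝 : ℕ → AddSubgroup N} {φ : M →ₗ[MvPolynomial σ k] N}

/-- Linear maps preserving degrees. -/
def IsGradedHom (𝓜 : ℕ → AddSubgroup M) (𝓝 : ℕ → AddSubgroup N)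
    (φ : M →ₗ[MvPolynomial σ k] N) : Prop :=
  ∀ ⦃e : ℕ⦄ ⦃x : M⦄, x ∈ 𝓜 e → φ x ∈ 𝓝 e

/-- Linear maps that preserve degrees and are surjective in each degree. -/
structure IsGradedEpi (𝓜 : ℕ → AddSubgroup M) (𝓝 : ℕ → AddSubgroup N)
    (φ : M →ₗ[MvPolynomial σ k] N) : Prop where
  isGradedHom : IsGradedHom 𝓜 𝓝 φ
  exists_preimage : ∀ ⦃e : ℕ⦄ ⦃y : N⦄, y ∈ 𝓝 e → ∃ x ∈ 𝓜 e, φ x = y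

theorem IsGradedEpi.surjective (h : IsGradedEpi 𝓜 𝓝 φ) (h𝓝 : ⨆ e, 𝓝 e = ⊤) :
    Function.Surjective φ := by
  suffices φ.toAddMonoidHom.range = ⊤ from AddMonoidHom.range_eq_top.1 this
  rw [eq_top_iff, ← h𝓝, iSup_le_iff]
  intro e y hy
  obtain ⟨x, -, rfl⟩ := h.exists_preimage hy
  exact ⟨x, rfl⟩

theorem IsGradedHom.iSup_inducedGrading_ker (h : IsGradedHom 𝓜 𝓝 φ) (h𝓜 : ⨆ e, 𝓜 e = ⊤)
    (h𝓝 : iSupIndep 𝓝) : ⨆ e, inducedGrading 𝓜 (LinearMap.ker φ) e = ⊤ := by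
  refine eq_top_iff.2 fun ⟨x, hx⟩ _ => ?_
  have hx𝓜 : x ∈ ⨆ e, AddSubgroup.toIntSubmodule (𝓜 e) := by
    rw [← OrderIso.map_iSup, h𝓜]
    trivial
  obtain ⟨f, hf, rfl⟩ := (Submodule.mem_iSup_iff_exists_finsupp _ _).1 hx𝓜
  have hker : ∀ e, f e ∈ LinearMap.ker φ := by
    intro e
    by_cases he : e ∈ f.support
    · rw [LinearMap.mem_ker, Finsupp.sum, map_sum] at hx
      exact (iSupIndep_iff_finsetSum_eq_zero_imp_eq_zero _).1
        (iSupIndep_map_orderIso_iff AddSubgroup.toIntSubmodule |>.2 h𝓝) f.support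
        (fun e => φ (f e)) (fun e _ => h (hf e)) hx e he
    · rw [Finsupp.notMem_support_iff.1 he]
      exact zero_mem _
  have hsum : (⟨_, hx⟩ : LinearMap.ker φ) = ∑ e ∈ f.support, ⟨f e, hker e⟩ :=
    Subtype.ext (by simp [Finsupp.sum])
  rw [hsum]
  exact sum_mem fun e _ => AddSubgroup.mem_iSup_of_mem e (hf e)

end GradedMaps

section ShortExact

variable {k : Type} [CommRing k] {σ : Type}
  {X Y Z : Type} [AddCommGroup X] [Module (MvPolynomial σ k) X]
  [AddCommGroup Y] [Module (MvPolynomial σ k) Y] [AddCommGroup Z] [Module (MvPolynomial σ k) Z]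
  {𝓧 : ℕ → AddSubgroup X} {𝓨 : ℕ → AddSubgroup Y} {𝓩 : ℕ → AddSubgroup Z}
  {f : X →ₗ[MvPolynomial σ k] Y} {g : Y →ₗ[MvPolynomial σ k] Z}

/-- Short exact sequences `0 → X → Y → Z → 0` of graded modules. -/
structure GradedShortExact (𝓧 : ℕ → AddSubgroup X) (𝓨 : ℕ → AddSubgroup Y)
    (𝓩 : ℕ → AddSubgroup Z) (f : X →ₗ[MvPolynomial σ k] Y) (g : Y →ₗ[MvPolynomial σ k] Z) :
    Prop where
  injective : Function.Injective f
  mem_iff : ∀ {e : ℕ} {x : X}, f x ∈ 𝓨 e ↔ x ∈ 𝓧 e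
  exact : Function.Exact f g
  epi : IsGradedEpi 𝓨 𝓩 g

theorem IsGradedEpi.comp {ψ : Y →ₗ[MvPolynomial σ k] Z} {φ : X →ₗ[MvPolynomial σ k] Y}
    (hψ : IsGradedEpi 𝓨 𝓩 ψ) (hφ : IsGradedEpi 𝓧 𝓨 φ) : IsGradedEpi 𝓧 𝓩 (ψ ∘ₗ φ) where
  isGradedHom _ _ hx := hψ.isGradedHom (hφ.isGradedHom hx)
  exists_preimage e z hz := by
    obtain ⟨y, hy, rfl⟩ := hψ.exists_preimage hz
    obtain ⟨x, hx, rfl⟩ := hφ.exists_preimage hy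
    exact ⟨x, hx, rfl⟩

/-- The grading of a product of graded modules. -/
def prodGrading (𝓧 : ℕ → AddSubgroup X) (𝓩 : ℕ → AddSubgroup Z) (e : ℕ) : AddSubgroup (X × Z) :=
  (𝓧 e).prod (𝓩 e)

theorem IsGradedModule.prod (h𝓧 : IsGradedModule k σ 𝓧) (h𝓩 : IsGradedModule k σ 𝓩) :
    IsGradedModule k σ (prodGrading 𝓧 𝓩) :=
  fun _ _ _ _ hp hx => ⟨h𝓧 hp hx.1, h𝓩 hp hx.2⟩

theorem gradedShortExact_prod (𝓧 : ℕ → AddSubgroup X) (𝓩 : ℕ → AddSubgroup Z) :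
    GradedShortExact 𝓧 (prodGrading 𝓧 𝓩) 𝓩 (LinearMap.inl (MvPolynomial σ k) X Z)
      (LinearMap.snd (MvPolynomial σ k) X Z) where
  injective := LinearMap.inl_injective
  mem_iff := ⟨fun h => h.1, fun h => ⟨h, zero_mem _⟩⟩
  exact := Function.Exact.inl_snd
  epi := ⟨fun _ _ h => h.2, fun _ z hz => ⟨(0, z), ⟨zero_mem _, hz⟩, rfl⟩⟩

theorem GradedShortExact.congr_middle (H : GradedShortExact 𝓧 𝓨 𝓩 f g) {Y' : Type}
    [AddCommGroup Y'] [Module (MvPolynomial σ k) Y'] {𝓨' : ℕ → AddSubgroup Y'}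
    (E : Y' ≃ₗ[MvPolynomial σ k] Y) (hE : ∀ {e y}, E y ∈ 𝓨 e ↔ y ∈ 𝓨' e) :
    GradedShortExact 𝓧 𝓨' 𝓩 (E.symm.toLinearMap ∘ₗ f) (g ∘ₗ E.toLinearMap) where
  injective := E.symm.injective.comp H.injective
  mem_iff {e x} := by simp [← hE, H.mem_iff]
  exact y := by
    rw [LinearMap.comp_apply, H.exact]
    simp only [Set.mem_range, LinearMap.comp_apply, LinearEquiv.coe_coe, LinearEquiv.symm_apply_eq]
  epi := H.epi.comp
    ⟨fun _ _ h => hE.2 h, fun _ y hy => ⟨E.symm y, hE.1 (by simpa using hy), by simp⟩⟩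

section NineLemma

variable {P Q P' : Type} [AddCommGroup P] [Module (MvPolynomial σ k) P]
  [AddCommGroup Q] [Module (MvPolynomial σ k) Q] [AddCommGroup P'] [Module (MvPolynomial σ k) P']
  {𝓟 : ℕ → AddSubgroup P} {𝓠 : ℕ → AddSubgroup Q} {𝓟' : ℕ → AddSubgroup P'}
  {i : P →ₗ[MvPolynomial σ k] Q} {p : Q →ₗ[MvPolynomial σ k] P'}
  {φ : P →ₗ[MvPolynomial σ k] X} {Φ : Q →ₗ[MvPolynomial σ k] Y} {φ' : P' →ₗ[MvPolynomial σ k] Z}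

theorem GradedShortExact.isGradedEpi_middle (H : GradedShortExact 𝓧 𝓨 𝓩 f g)
    (H' : GradedShortExact 𝓟 𝓠 𝓟' i p) (hφ : IsGradedEpi 𝓟 𝓧 φ) (hφ' : IsGradedEpi 𝓟' 𝓩 φ')
    (hΦ : IsGradedHom 𝓠 𝓨 Φ) (hi : ∀ a, Φ (i a) = f (φ a)) (hp : ∀ q, g (Φ q) = φ' (p q)) :
    IsGradedEpi 𝓠 𝓨 Φ where
  isGradedHom := hΦ
  exists_preimage e y hy := by
    obtain ⟨c, hc, hcy⟩ := hφ'.exists_preimage (H.epi.isGradedHom hy)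
    obtain ⟨q, hq, rfl⟩ := H'.epi.exists_preimage hc
    obtain ⟨x, hx⟩ := (H.exact (y - Φ q)).1 (by rw [map_sub, hp, hcy, sub_self])
    have hxe : x ∈ 𝓧 e := H.mem_iff.1 (hx ▸ sub_mem hy (hΦ hq))
    obtain ⟨a, ha, rfl⟩ := hφ.exists_preimage hxe
    exact ⟨i a + q, add_mem (H'.mem_iff.2 ha) hq, by rw [map_add, hi, hx, sub_add_cancel]⟩

theorem GradedShortExact.ker (H : GradedShortExact 𝓧 𝓨 𝓩 f g)
    (H' : GradedShortExact 𝓟 𝓠 𝓟' i p) (hφ : IsGradedEpi 𝓟 𝓧 φ) (hΦ : IsGradedHom 𝓠 𝓨 Φ)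
    (hi : ∀ a, Φ (i a) = f (φ a)) (hp : ∀ q, g (Φ q) = φ' (p q)) :
    ∃ (i' : LinearMap.ker φ →ₗ[MvPolynomial σ k] LinearMap.ker Φ)
      (p' : LinearMap.ker Φ →ₗ[MvPolynomial σ k] LinearMap.ker φ'),
      GradedShortExact (inducedGrading 𝓟 (LinearMap.ker φ))
        (inducedGrading 𝓠 (LinearMap.ker Φ)) (inducedGrading 𝓟' (LinearMap.ker φ')) i' p' := by
  refine ⟨i.restrict (p := LinearMap.ker φ) (q := LinearMap.ker Φ) fun a ha => ?_,
    p.restrict (p := LinearMap.ker Φ) (q := LinearMap.ker φ') fun q hq => ?_,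
    ?_, H'.mem_iff, ?_, ?_, ?_⟩
  · rw [LinearMap.mem_ker, hi, LinearMap.mem_ker.1 ha, map_zero]
  · rw [LinearMap.mem_ker, ← hp, LinearMap.mem_ker.1 hq, map_zero]
  · exact fun a b hab => Subtype.ext (H'.injective (congrArg Subtype.val hab))
  · rintro ⟨q, hq⟩
    refine ⟨fun h => ?_, ?_⟩
    · obtain ⟨a, rfl⟩ := (H'.exact q).1 (congrArg Subtype.val h)
      refine ⟨⟨a, H.injective ?_⟩, rfl⟩
      rw [← hi, LinearMap.mem_ker.1 hq, map_zero]
    · rintro ⟨a, ha⟩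
      exact Subtype.ext ((H'.exact q).2 ⟨a, congrArg Subtype.val ha⟩)
  · exact fun e q hq => H'.epi.isGradedHom hq
  · rintro e ⟨z, hz⟩ hze
    obtain ⟨q, hq, rfl⟩ := H'.epi.exists_preimage hze
    obtain ⟨x, hx⟩ := (H.exact (Φ q)).1 (by rw [hp, LinearMap.mem_ker.1 hz])
    have hxe : x ∈ 𝓧 e := H.mem_iff.1 (hx ▸ hΦ hq)
    obtain ⟨a, ha, rfl⟩ := hφ.exists_preimage hxe
    refine ⟨⟨q - i a, ?_⟩, sub_mem hq (H'.mem_iff.2 ha), Subtype.ext ?_⟩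
    · rw [LinearMap.mem_ker, map_sub, hi, hx, sub_self]
    · change p (q - i a) = p q
      rw [map_sub, (H'.exact (i a)).2 ⟨a, rfl⟩, sub_zero]

end NineLemma

theorem GradedShortExact.exists_ker_comp (H : GradedShortExact 𝓧 𝓨 𝓩 f g) {P : Type}
    [AddCommGroup P] [Module (MvPolynomial σ k) P] {𝓟 : ℕ → AddSubgroup P}
    {φ : P →ₗ[MvPolynomial σ k] Y} (hφ : IsGradedEpi 𝓟 𝓨 φ) :
    ∃ (i : LinearMap.ker φ →ₗ[MvPolynomial σ k] LinearMap.ker (g ∘ₗ φ))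
      (p : LinearMap.ker (g ∘ₗ φ) →ₗ[MvPolynomial σ k] X),
      GradedShortExact (inducedGrading 𝓟 (LinearMap.ker φ))
        (inducedGrading 𝓟 (LinearMap.ker (g ∘ₗ φ))) 𝓧 i p := by
  have hrange (a : LinearMap.ker (g ∘ₗ φ)) : φ a ∈ LinearMap.range f := (H.exact _).1 a.2
  let p : LinearMap.ker (g ∘ₗ φ) →ₗ[MvPolynomial σ k] X :=
    (LinearEquiv.ofInjective f H.injective).symm ∘ₗ
      (φ ∘ₗ (LinearMap.ker (g ∘ₗ φ)).subtype).codRestrict _ hrange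
  have hp (a) : f (p a) = φ a :=
    congrArg Subtype.val ((LinearEquiv.ofInjective f H.injective).apply_symm_apply ⟨_, hrange a⟩)
  refine ⟨Submodule.inclusion (LinearMap.ker_le_ker_comp φ g), p,
    Submodule.inclusion_injective _, Iff.rfl, ?_, ?_, ?_⟩
  · intro a
    rw [← map_eq_zero_iff f H.injective, hp]
    exact ⟨fun h => ⟨⟨a, h⟩, rfl⟩, by rintro ⟨b, rfl⟩; exact b.2⟩
  · intro e a ha
    rw [← H.mem_iff, hp]
    exact hφ.isGradedHom ha
  · intro e x hx
    obtain ⟨a, ha, hax⟩ := hφ.exists_preimage (H.mem_iff.2 hx)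
    have hker : a ∈ LinearMap.ker (g ∘ₗ φ) := (H.exact _).2 ⟨x, hax.symm⟩
    exact ⟨⟨a, hker⟩, ha, H.injective ((hp _).trans hax)⟩

end ShortExact

section FreeModules

variable {k : Type} [CommRing k] {σ : Type} {κ κ' : Type}

theorem isGradedHom_freeGrading {N : Type} [AddCommGroup N] [Module (MvPolynomial σ k) N]
    {𝓝 : ℕ → AddSubgroup N} (h𝓝 : IsGradedModule k σ 𝓝) {deg : κ → ℕ}
    {φ : (κ →₀ MvPolynomial σ k) →ₗ[MvPolynomial σ k] N}
    (h : ∀ b, φ (Finsupp.single b 1) ∈ 𝓝 (deg b)) : IsGradedHom (freeGrading deg) 𝓝 φ := by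
  intro e f hf
  rw [← Finsupp.sum_single f, map_finsuppSum]
  refine sum_mem fun b _ => ?_
  rw [← mul_one (f b), ← smul_eq_mul]
  beta_reduce
  rw [← Finsupp.smul_single, map_smul]
  rcases isHomogeneous_apply_of_mem_freeGrading hf b with h0 | ⟨m, rfl, hm⟩
  · rw [h0, zero_smul]
    exact zero_mem _
  · exact h𝓝 hm (h b)

theorem IsGradedEpi.exists_lift {M N : Type} [AddCommGroup M] [Module (MvPolynomial σ k) M]
    [AddCommGroup N] [Module (MvPolynomial σ k) N] {𝓜 : ℕ → AddSubgroup M}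
    {𝓝 : ℕ → AddSubgroup N} (h𝓜 : IsGradedModule k σ 𝓜) {g : M →ₗ[MvPolynomial σ k] N}
    (hg : IsGradedEpi 𝓜 𝓝 g) {deg : κ → ℕ} {φ : (κ →₀ MvPolynomial σ k) →ₗ[MvPolynomial σ k] N}
    (hφ : IsGradedHom (freeGrading deg) 𝓝 φ) :
    ∃ ψ, IsGradedHom (freeGrading deg) 𝓜 ψ ∧ g ∘ₗ ψ = φ := by
  choose y hy hgy using fun b => hg.exists_preimage (hφ (basis_mem_freeGrading deg b))
  refine ⟨Finsupp.linearCombination _ y, isGradedHom_freeGrading h𝓜 fun b => ?_, ?_⟩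
  · rw [Finsupp.linearCombination_single, one_smul]
    exact hy b
  · refine Finsupp.lhom_ext' fun b => LinearMap.ext_ring ?_
    simp [hgy]

theorem mem_freeGrading_sum_iff {deg : κ → ℕ} {deg' : κ' → ℕ} {e : ℕ}
    {f : κ ⊕ κ' →₀ MvPolynomial σ k} :
    Finsupp.sumFinsuppLEquivProdFinsupp (MvPolynomial σ k) f ∈
        prodGrading (freeGrading deg) (freeGrading deg') e ↔
      f ∈ freeGrading (Sum.elim deg deg') e := by
  simp only [prodGrading, AddSubgroup.mem_prod, mem_freeGrading_iff, Sum.forall, Sum.elim_inl,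
    Sum.elim_inr, Finsupp.fst_sumFinsuppLEquivProdFinsupp, Finsupp.snd_sumFinsuppLEquivProdFinsupp]

end FreeModules

section RegularityBounds

variable {k : Type} [CommRing k] {σ : Type}
  {X Y Z : Type} [AddCommGroup X] [Module (MvPolynomial σ k) X]
  [AddCommGroup Y] [Module (MvPolynomial σ k) Y] [AddCommGroup Z] [Module (MvPolynomial σ k) Z]
  {𝓧 : ℕ → AddSubgroup X} {𝓨 : ℕ → AddSubgroup Y} {𝓩 : ℕ → AddSubgroup Z}
  {f : X →ₗ[MvPolynomial σ k] Y} {g : Y →ₗ[MvPolynomial σ k] Z} {l l' R R' : ℕ}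

variable (k σ) in
/-- `RegLE k σ l 𝓜 R` says that the graded module `M` has a graded free resolution of length at
most `l`, with finite free modules, whose `i`-th term is generated in degrees at most `R + i`. -/
def RegLE : ℕ → ∀ {M : Type} [AddCommGroup M] [Module (MvPolynomial σ k) M],
    (ℕ → AddSubgroup M) → ℕ → Prop
  | 0, _, _, _, 𝓜, _ => ∀ e, 𝓜 e = ⊥
  | l + 1, M, _, _, 𝓜, R => ∃ (κ : Type) (_ : Finite κ) (deg : κ → ℕ)
      (φ : (κ →₀ MvPolynomial σ k) →ₗ[MvPolynomial σ k] M),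
      (∀ b, deg b ≤ R) ∧ IsGradedEpi (freeGrading deg) 𝓜 φ ∧
      RegLE l (inducedGrading (freeGrading deg) (LinearMap.ker φ)) (R + 1)

theorem regLE_of_subsingleton [Subsingleton X] (𝓧 : ℕ → AddSubgroup X) :
    RegLE k σ 0 𝓧 R :=
  fun _ => Subsingleton.elim _ _

theorem RegLE.mono (h : RegLE k σ l 𝓧 R) (hR : R ≤ R') : RegLE k σ l 𝓧 R' := by
  induction l generalizing X R R' with
  | zero => exact h
  | succ l ih =>
    obtain ⟨κ, hκ, deg, φ, hdeg, hφ, hker⟩ := h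
    exact ⟨κ, hκ, deg, φ, fun b => (hdeg b).trans hR, hφ, ih hker (by lia)⟩

theorem RegLE.succ (h : RegLE k σ l 𝓧 R) : RegLE k σ (l + 1) 𝓧 R := by
  induction l generalizing X R with
  | zero =>
    refine ⟨Empty, inferInstance, Empty.elim, 0, fun b => b.elim,
      ⟨fun e x _ => zero_mem _, fun e y hy => ⟨0, zero_mem _, ?_⟩⟩, regLE_of_subsingleton _⟩
    rw [h e, AddSubgroup.mem_bot] at hy
    rw [hy, map_zero]
  | succ l ih =>
    obtain ⟨κ, hκ, deg, φ, hdeg, hφ, hker⟩ := h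
    exact ⟨κ, hκ, deg, φ, hdeg, hφ, ih hker⟩

theorem RegLE.mono_length (h : RegLE k σ l 𝓧 R) (hl : l ≤ l') : RegLE k σ l' 𝓧 R := by
  induction hl with
  | refl => exact h
  | step _ ih => exact ih.succ

theorem mem_freeGrading_add_iff {κ : Type} {deg : κ → ℕ} {d e : ℕ} {f : κ →₀ MvPolynomial σ k} :
    f ∈ freeGrading (fun b => deg b + d) (e + d) ↔ f ∈ freeGrading deg e := by
  simp only [mem_freeGrading_iff, ← add_assoc, Nat.add_right_cancel_iff]

theorem eq_zero_of_mem_freeGrading_add {κ : Type} {deg : κ → ℕ} {d e : ℕ} (he : e < d)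
    {f : κ →₀ MvPolynomial σ k} (hf : f ∈ freeGrading (fun b => deg b + d) e) : f = 0 := by
  ext b s
  by_contra hs
  have := hf b s hs
  lia

theorem RegLE.of_linearEquiv {d : ℕ} (h : RegLE k σ l 𝓧 R) (T : X ≃ₗ[MvPolynomial σ k] Y)
    (hT : ∀ {e x}, T x ∈ 𝓨 (e + d) ↔ x ∈ 𝓧 e) (h𝓨 : ∀ e < d, 𝓨 e = ⊥) :
    RegLE k σ l 𝓨 (R + d) := by
  induction l generalizing X Y R with
  | zero =>
    intro e
    rcases lt_or_ge e d with he | he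
    · exact h𝓨 e he
    · obtain ⟨e, rfl⟩ := Nat.exists_eq_add_of_le' he
      refine (AddSubgroup.eq_bot_iff_forall _).2 fun y hy => ?_
      rw [← T.apply_symm_apply y, hT, h e, AddSubgroup.mem_bot] at hy
      rw [← T.apply_symm_apply y, hy, map_zero]
  | succ l ih =>
    obtain ⟨κ, hκ, deg, φ, hdeg, hφ, hker⟩ := h
    refine ⟨κ, hκ, fun b => deg b + d, T.toLinearMap ∘ₗ φ,
      fun b => Nat.add_le_add_right (hdeg b) d, ⟨fun e f hf => ?_, fun e y hy => ?_⟩, ?_⟩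
    · rcases lt_or_ge e d with he | he
      · rw [eq_zero_of_mem_freeGrading_add he hf, map_zero]
        exact zero_mem _
      · obtain ⟨e, rfl⟩ := Nat.exists_eq_add_of_le' he
        exact hT.2 (hφ.isGradedHom (mem_freeGrading_add_iff.1 hf))
    · rcases lt_or_ge e d with he | he
      · rw [h𝓨 e he, AddSubgroup.mem_bot] at hy
        exact ⟨0, zero_mem _, by rw [hy, map_zero]⟩
      · obtain ⟨e, rfl⟩ := Nat.exists_eq_add_of_le' he
        rw [← T.apply_symm_apply y, hT] at hy
        obtain ⟨f, hf, hfy⟩ := hφ.exists_preimage hy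
        exact ⟨f, mem_freeGrading_add_iff.2 hf, by simp [hfy]⟩
    · rw [add_right_comm]
      exact ih hker (LinearEquiv.ofEq _ _ (LinearEquiv.ker_comp T φ).symm)
        mem_freeGrading_add_iff fun e he => (AddSubgroup.eq_bot_iff_forall _).2 fun x hx =>
          Subtype.ext (eq_zero_of_mem_freeGrading_add he hx)

theorem RegLE.horseshoe (h𝓨 : IsGradedModule k σ 𝓨) (H : GradedShortExact 𝓧 𝓨 𝓩 f g)
    (hX : RegLE k σ l 𝓧 R) (hZ : RegLE k σ l 𝓩 R) : RegLE k σ l 𝓨 R := by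
  induction l generalizing X Y Z R with
  | zero =>
    refine fun e => (AddSubgroup.eq_bot_iff_forall _).2 fun y hy => ?_
    have hgy : g y ∈ 𝓩 e := H.epi.isGradedHom hy
    rw [hZ e, AddSubgroup.mem_bot] at hgy
    obtain ⟨x, rfl⟩ := (H.exact y).1 hgy
    rw [H.mem_iff, hX e, AddSubgroup.mem_bot] at hy
    rw [hy, map_zero]
  | succ l ih =>
    obtain ⟨κ, hκ, deg, φ, hdeg, hφ, hker⟩ := hX
    obtain ⟨κ', hκ', deg', φ', hdeg', hφ', hker'⟩ := hZ
    obtain ⟨ψ, hψ, hgψ⟩ := H.epi.exists_lift h𝓨 hφ'.isGradedHom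
    let E := Finsupp.sumFinsuppLEquivProdFinsupp (MvPolynomial σ k) (M := MvPolynomial σ k)
      (α := κ) (β := κ')
    let Φ := (f ∘ₗ φ).coprod ψ ∘ₗ E.toLinearMap
    have H' := (gradedShortExact_prod (freeGrading deg) (freeGrading deg')).congr_middle E
      mem_freeGrading_sum_iff
    have hΦ : IsGradedHom (freeGrading (Sum.elim deg deg')) 𝓨 Φ := by
      intro e x hx
      rw [← mem_freeGrading_sum_iff] at hx
      exact add_mem (H.mem_iff.2 (hφ.isGradedHom hx.1)) (hψ hx.2)
    have hi (a) : Φ ((E.symm.toLinearMap ∘ₗ LinearMap.inl _ _ _) a) = f (φ a) := by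
      simp [Φ]
    have hp (q) : g (Φ q) = φ' ((LinearMap.snd _ _ _ ∘ₗ E.toLinearMap) q) := by
      simp [Φ, H.exact.apply_apply_eq_zero, ← hgψ]
    obtain ⟨i', p', hK⟩ := H.ker H' hφ hΦ hi hp
    exact ⟨κ ⊕ κ', inferInstance, Sum.elim deg deg', Φ, Sum.forall.2 ⟨hdeg, hdeg'⟩,
      H.isGradedEpi_middle H' hφ hφ' hΦ hi hp,
      ih ((isGradedModule_freeGrading _).induced _) hK hker hker'⟩

theorem RegLE.mapping_cone (H : GradedShortExact 𝓧 𝓨 𝓩 f g) (hY : RegLE k σ (l + 1) 𝓨 R)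
    (hX : RegLE k σ l 𝓧 (R + 1)) : RegLE k σ (l + 1) 𝓩 R := by
  obtain ⟨κ, hκ, deg, φ, hdeg, hφ, hker⟩ := hY
  obtain ⟨i, p, hK⟩ := H.exists_ker_comp hφ
  exact ⟨κ, hκ, deg, g ∘ₗ φ, hdeg, H.epi.comp hφ,
    horseshoe ((isGradedModule_freeGrading _).induced _) hK hker hX⟩

theorem RegLE.exists_fin_cover (h : RegLE k σ l 𝓧 R) :
    ∃ (r : ℕ) (deg : Fin r → ℕ) (φ : (Fin r →₀ MvPolynomial σ k) →ₗ[MvPolynomial σ k] X),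
      (∀ b, deg b ≤ R) ∧ IsGradedEpi (freeGrading deg) 𝓧 φ ∧
      RegLE k σ l (inducedGrading (freeGrading deg) (LinearMap.ker φ)) (R + 1) := by
  obtain ⟨κ, hκ, deg, φ, hdeg, hφ, hker⟩ := h.succ
  obtain ⟨r, ⟨E⟩⟩ := Finite.exists_equiv_fin κ
  let T := Finsupp.domLCongr (M := MvPolynomial σ k) (R := MvPolynomial σ k) E.symm
  have hT {e x} : T x ∈ freeGrading deg e ↔ x ∈ freeGrading (deg ∘ E.symm) e := by
    simp only [mem_freeGrading_iff, E.symm.forall_congr_left, T, Finsupp.domLCongr_apply,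
      Finsupp.domCongr_apply, Finsupp.equivMapDomain_apply, Function.comp_apply, Equiv.symm_symm,
      Equiv.symm_apply_apply]
  refine ⟨r, deg ∘ E.symm, φ ∘ₗ T.toLinearMap, fun b => hdeg _, hφ.comp
    ⟨fun e x hx => hT.2 hx, fun e x hx => ⟨T.symm x, hT.1 (by simpa using hx), by simp⟩⟩, ?_⟩
  let T' : LinearMap.ker (φ ∘ₗ T.toLinearMap) ≃ₗ[MvPolynomial σ k] LinearMap.ker φ :=
    T.ofSubmodule' (LinearMap.ker φ)
  refine hker.of_linearEquiv (d := 0) T'.symm (fun {e x} => ?_) (by simp)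
  obtain ⟨y, rfl⟩ := T'.surjective x
  rw [LinearEquiv.symm_apply_apply]
  exact hT.symm

end RegularityBounds

section HomogeneousIdeals

variable {k : Type} [CommRing k] {σ : Type} {I J : Ideal (MvPolynomial σ k)} {l R : ℕ}

theorem iSup_inducedGrading_polyGrading (hI : ∀ e, ∀ p ∈ I, homogeneousComponent e p ∈ I) :
    ⨆ e, inducedGrading polyGrading I e = ⊤ := by
  refine eq_top_iff.2 fun ⟨p, hp⟩ _ => ?_
  have hsum : (⟨p, hp⟩ : I) =
      ∑ e ∈ Finset.range (p.totalDegree + 1), ⟨homogeneousComponent e p, hI e p hp⟩ :=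
    Subtype.ext (by simp [sum_homogeneousComponent])
  rw [hsum]
  exact sum_mem fun e _ => AddSubgroup.mem_iSup_of_mem e (homogeneousComponent_isHomogeneous e p)

theorem gradedShortExact_sup (hI : ∀ e, ∀ p ∈ I, homogeneousComponent e p ∈ I)
    (hJ : ∀ e, ∀ p ∈ J, homogeneousComponent e p ∈ J) :
    GradedShortExact (inducedGrading polyGrading (I ⊓ J))
      (prodGrading (inducedGrading polyGrading I) (inducedGrading polyGrading J))
      (inducedGrading polyGrading (I ⊔ J))
      ((Submodule.inclusion inf_le_left).prod (-Submodule.inclusion inf_le_right))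
      ((Submodule.inclusion le_sup_left).coprod (Submodule.inclusion le_sup_right)) where
  injective x y hxy := Subtype.ext (congrArg (fun z => (z.1 : MvPolynomial σ k)) hxy)
  mem_iff := fun {e x} => ⟨fun h => h.1, fun h => ⟨h, neg_mem (S := AddSubgroup _) h⟩⟩
  exact := by
    rintro ⟨⟨a, ha⟩, ⟨b, hb⟩⟩
    rw [Subtype.ext_iff]
    constructor
    · intro h
      have hab : b = -a := eq_neg_of_add_eq_zero_right h
      exact ⟨⟨a, ha, neg_mem_iff.1 (hab ▸ hb)⟩, Prod.ext rfl (Subtype.ext hab.symm)⟩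
    · rintro ⟨x, hx⟩
      obtain ⟨rfl, rfl⟩ : (x : MvPolynomial σ k) = a ∧ -(x : MvPolynomial σ k) = b := by
        simpa [Prod.ext_iff, Subtype.ext_iff] using hx
      exact add_neg_cancel _
  epi := by
    refine ⟨fun e x hx => add_mem (S := AddSubgroup _) hx.1 hx.2, ?_⟩
    rintro e ⟨p, hp⟩ hpe
    obtain ⟨a, ha, b, hb, rfl⟩ := Submodule.mem_sup.1 hp
    refine ⟨(⟨_, hI e a ha⟩, ⟨_, hJ e b hb⟩), ⟨homogeneousComponent_isHomogeneous e a,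
      homogeneousComponent_isHomogeneous e b⟩, Subtype.ext ?_⟩
    have h := homogeneousComponent_of_mem (m := e) (n := e) (p := a + b) hpe
    rw [if_pos rfl, map_add] at h
    exact h

theorem RegLE.sup (hI : ∀ e, ∀ p ∈ I, homogeneousComponent e p ∈ I)
    (hJ : ∀ e, ∀ p ∈ J, homogeneousComponent e p ∈ J)
    (rI : RegLE k σ (l + 1) (inducedGrading polyGrading I) R)
    (rJ : RegLE k σ (l + 1) (inducedGrading polyGrading J) R)
    (rIJ : RegLE k σ l (inducedGrading polyGrading (I ⊓ J)) (R + 1)) :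
    RegLE k σ (l + 1) (inducedGrading polyGrading (I ⊔ J)) R :=
  mapping_cone (gradedShortExact_sup hI hJ)
    (horseshoe ((isGradedModule_polyGrading.induced I).prod (isGradedModule_polyGrading.induced J))
      (gradedShortExact_prod _ _) rI rJ) rIJ

end HomogeneousIdeals

section MonomialIdeals

variable {k : Type} [CommRing k] {σ : Type} {U V : Set (σ →₀ ℕ)} {R R' : ℕ}

variable (k) in
/-- Regularity bound for the monomial ideal whose monomials have exponents in the upper set `U`,
the length of the resolution being unspecified. -/
def MonomialRegLE (U : Set (σ →₀ ℕ)) (R : ℕ) : Prop :=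
  ∃ (hU : IsUpperSet U) (l : ℕ),
    RegLE k σ l (inducedGrading polyGrading (restrictSupportIdeal k U hU)) R

theorem mem_restrictSupportIdeal_iff {hU : IsUpperSet U} {p : MvPolynomial σ k} :
    p ∈ restrictSupportIdeal k U hU ↔ ∀ s, coeff s p ≠ 0 → s ∈ U := by
  simp only [← mem_support_iff]
  rfl

theorem homogeneousComponent_mem_restrictSupportIdeal (hU : IsUpperSet U) (e : ℕ)
    (p : MvPolynomial σ k) (hp : p ∈ restrictSupportIdeal k U hU) :
    homogeneousComponent e p ∈ restrictSupportIdeal k U hU := by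
  rw [mem_restrictSupportIdeal_iff] at hp ⊢
  intro s hs
  rw [coeff_homogeneousComponent] at hs
  exact hp s (ite_ne_right_iff.1 hs).2

theorem restrictSupportIdeal_inter (hU : IsUpperSet U) (hV : IsUpperSet V) :
    restrictSupportIdeal k (U ∩ V) (hU.inter hV) =
      restrictSupportIdeal k U hU ⊓ restrictSupportIdeal k V hV := by
  ext p
  simp only [Submodule.mem_inf, mem_restrictSupportIdeal_iff, Set.mem_inter_iff, imp_and,
    forall_and]

theorem restrictSupportIdeal_union (hU : IsUpperSet U) (hV : IsUpperSet V) :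
    restrictSupportIdeal k (U ∪ V) (hU.union hV) =
      restrictSupportIdeal k U hU ⊔ restrictSupportIdeal k V hV := by
  apply le_antisymm
  · intro p hp
    rw [p.as_sum]
    refine sum_mem fun s hs => ?_
    rcases hp hs with h | h
    · exact Ideal.mem_sup_left ((monomial_mem_restrictSupport k).2 (Or.inl h))
    · exact Ideal.mem_sup_right ((monomial_mem_restrictSupport k).2 (Or.inl h))
  · exact sup_le (restrictSupport_mono (R := k) Set.subset_union_left)
      (restrictSupport_mono (R := k) Set.subset_union_right)

theorem MonomialRegLE.mono (h : MonomialRegLE k U R) (hR : R ≤ R') : MonomialRegLE k U R' := by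
  obtain ⟨hU, l, h⟩ := h
  exact ⟨hU, l, h.mono hR⟩

theorem monomialRegLE_empty (R : ℕ) : MonomialRegLE k (∅ : Set (σ →₀ ℕ)) R := by
  have : Subsingleton (restrictSupportIdeal k (∅ : Set (σ →₀ ℕ)) isUpperSet_empty) := by
    refine Submodule.subsingleton_iff_eq_bot.2 ((Submodule.eq_bot_iff _).2 fun p hp => ?_)
    exact support_eq_empty.1 (Finset.coe_eq_empty.1 (Set.subset_empty_iff.1 hp))
  exact ⟨isUpperSet_empty, 0, regLE_of_subsingleton _⟩

theorem monomialRegLE_univ (R : ℕ) : MonomialRegLE k (Set.univ : Set (σ →₀ ℕ)) R := by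
  let I := restrictSupportIdeal k (Set.univ : Set (σ →₀ ℕ)) isUpperSet_univ
  have hI (p : MvPolynomial σ k) : p ∈ I := Set.subset_univ _
  let φ : (Unit →₀ MvPolynomial σ k) →ₗ[MvPolynomial σ k] I :=
    (Finsupp.lapply ()).codRestrict I fun _ => hI _
  have : Subsingleton (LinearMap.ker φ) :=
    Submodule.subsingleton_iff_eq_bot.2 <| (Submodule.eq_bot_iff _).2 fun f hf =>
      Finsupp.ext fun _ => congrArg Subtype.val (LinearMap.mem_ker.1 hf)
  refine ⟨isUpperSet_univ, 1, Unit, inferInstance, fun _ => 0, φ, fun _ => R.zero_le,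
    ⟨fun e f hf => isHomogeneous_iff_forall_coeff.2 (hf ()), fun e p hp =>
      ⟨Finsupp.single () p, single_mem_freeGrading (fun _ => 0) hp, ?_⟩⟩, regLE_of_subsingleton _⟩
  exact Subtype.ext (Finsupp.single_eq_same)

theorem isHomogeneous_monomial_mul_iff {m : σ →₀ ℕ} {p : MvPolynomial σ k} {e : ℕ} :
    (monomial m 1 * p).IsHomogeneous (e + m.degree) ↔ p.IsHomogeneous e := by
  constructor
  · intro h
    refine isHomogeneous_iff_forall_coeff.2 fun s hs => ?_
    have := isHomogeneous_iff_forall_coeff.1 h (m + s) (by rwa [coeff_monomial_mul, one_mul])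
    rw [map_add] at this
    lia
  · intro h
    rw [add_comm]
    exact (isHomogeneous_monomial 1 rfl).mul h

theorem isUpperSet_add_right_image (hU : IsUpperSet U) (m : σ →₀ ℕ) :
    IsUpperSet ((· + m) '' U) := by
  rintro _ b hab ⟨a, ha, rfl⟩
  exact ⟨b - m, hU (le_tsub_of_add_le_right hab) ha,
    tsub_add_cancel_of_le (le_of_add_le_right hab)⟩

theorem le_of_coeff_ne_zero_of_mem_translate (hU : IsUpperSet U) {m s : σ →₀ ℕ}
    {p : MvPolynomial σ k}
    (hp : p ∈ restrictSupportIdeal k _ (isUpperSet_add_right_image hU m)) (hs : coeff s p ≠ 0) :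
    m ≤ s := by
  obtain ⟨a, -, rfl⟩ := mem_restrictSupportIdeal_iff.1 hp s hs
  exact le_add_self

theorem exists_linearEquiv_translate (hU : IsUpperSet U) (m : σ →₀ ℕ) :
    ∃ T : restrictSupportIdeal k U hU ≃ₗ[MvPolynomial σ k]
        restrictSupportIdeal k _ (isUpperSet_add_right_image hU m),
      ∀ p, (T p : MvPolynomial σ k) = monomial m 1 * p.1 := by
  have hmul (p : restrictSupportIdeal k U hU) : monomial m 1 * p.1 ∈
      restrictSupportIdeal k _ (isUpperSet_add_right_image hU m) := by
    rw [mem_restrictSupportIdeal_iff]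
    intro s hs
    rw [coeff_monomial_mul', one_mul, ite_ne_right_iff] at hs
    exact ⟨s - m, mem_restrictSupportIdeal_iff.1 p.2 _ hs.2, tsub_add_cancel_of_le hs.1⟩
  let T := ((LinearMap.mulLeft (MvPolynomial σ k) (monomial m (1 : k))).domRestrict
    (restrictSupportIdeal k U hU)).codRestrict _ hmul
  have hinj : Function.Injective T := fun p q hpq => Subtype.ext <| by
    have h : monomial m 1 * p.1 = monomial m 1 * q.1 := congrArg Subtype.val hpq
    rw [← divMonomial_monomial_mul m p.1, h, divMonomial_monomial_mul]
  have hsurj : Function.Surjective T := by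
    rintro ⟨p, hp⟩
    refine ⟨⟨p.divMonomial m, mem_restrictSupportIdeal_iff.2 fun s hs => ?_⟩, Subtype.ext ?_⟩
    · rw [coeff_divMonomial] at hs
      obtain ⟨a, ha, has⟩ := mem_restrictSupportIdeal_iff.1 hp _ hs
      rwa [add_left_cancel (has.symm.trans (add_comm a m))]
    · ext s
      change coeff s (monomial m 1 * p.divMonomial m) = coeff s p
      rw [coeff_monomial_mul', coeff_divMonomial, one_mul]
      split_ifs with hms
      · rw [add_tsub_cancel_of_le hms]
      · exact (not_imp_comm.1 (le_of_coeff_ne_zero_of_mem_translate hU hp) hms).symm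
  exact ⟨LinearEquiv.ofBijective T ⟨hinj, hsurj⟩, fun _ => rfl⟩

theorem MonomialRegLE.translate (h : MonomialRegLE k U R) (m : σ →₀ ℕ) :
    MonomialRegLE k ((· + m) '' U) (R + m.degree) := by
  obtain ⟨hU, l, h⟩ := h
  obtain ⟨T, hT⟩ := exists_linearEquiv_translate (k := k) hU m
  refine ⟨isUpperSet_add_right_image hU m, l, h.of_linearEquiv T (fun {e p} => ?_) fun e he =>
      (AddSubgroup.eq_bot_iff_forall _).2 fun p hp => Subtype.ext ?_⟩
  · change (T p : MvPolynomial σ k).IsHomogeneous _ ↔ _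
    rw [hT]
    exact isHomogeneous_monomial_mul_iff
  · ext s
    by_contra hs
    have := isHomogeneous_iff_forall_coeff.1 hp s hs
    have := Finsupp.degree_mono (le_of_coeff_ne_zero_of_mem_translate hU p.2 hs)
    lia

theorem MonomialRegLE.union (hU : MonomialRegLE k U R) (hV : MonomialRegLE k V R)
    (hUV : MonomialRegLE k (U ∩ V) (R + 1)) : MonomialRegLE k (U ∪ V) R := by
  obtain ⟨uU, l, hU⟩ := hU
  obtain ⟨uV, l', hV⟩ := hV
  obtain ⟨uUV, l'', hUV⟩ := hUV
  rw [restrictSupportIdeal_inter uU uV] at hUV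
  refine ⟨uU.union uV, l + l' + l'' + 1, ?_⟩
  rw [restrictSupportIdeal_union uU uV]
  exact RegLE.sup (homogeneousComponent_mem_restrictSupportIdeal uU)
    (homogeneousComponent_mem_restrictSupportIdeal uV) (hU.mono_length (by lia))
    (hV.mono_length (by lia)) (hUV.mono_length (by lia))

theorem erase_le_self (a : σ →₀ ℕ) (i : σ) : a.erase i ≤ a := fun j => by
  classical
  rw [Finsupp.erase_apply]
  split_ifs <;> simp

theorem erase_le_erase {a b : σ →₀ ℕ} (hab : a ≤ b) (i : σ) : a.erase i ≤ b.erase i := fun j => by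
  classical
  rw [Finsupp.erase_apply, Finsupp.erase_apply]
  split_ifs
  · exact le_rfl
  · exact hab j

theorem MonomialRegLE.of_slice (hU : IsUpperSet U) (i : σ)
    (h0 : MonomialRegLE k {a | a.erase i ∈ U} (R + 1))
    (h1 : MonomialRegLE k {a | a + Finsupp.single i 1 ∈ U} R) : MonomialRegLE k U (R + 1) := by
  classical
  have herase_add (a : σ →₀ ℕ) : (a + Finsupp.single i 1).erase i = a.erase i := by
    simp [Finsupp.erase_add]
  have hunion : {a | a.erase i ∈ U} ∪
      (· + Finsupp.single i 1) '' {a | a + Finsupp.single i 1 ∈ U} = U := by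
    refine subset_antisymm
      (Set.union_subset (fun a ha => hU (erase_le_self a i) ha) ?_) fun a ha => ?_
    · rintro _ ⟨a, ha, rfl⟩
      exact ha
    · by_cases hi : a i = 0
      · left
        rwa [Set.mem_ofPred_eq, Finsupp.erase_of_notMem_support (by simpa using hi)]
      · have := tsub_add_cancel_of_le (Finsupp.single_le_iff.2 (Nat.one_le_iff_ne_zero.2 hi))
        exact Or.inr ⟨a - Finsupp.single i 1, by rwa [Set.mem_ofPred_eq, this], this⟩
  have hinter : {a | a.erase i ∈ U} ∩
      (· + Finsupp.single i 1) '' {a | a + Finsupp.single i 1 ∈ U} =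
      (· + Finsupp.single i 1) '' {a | a.erase i ∈ U} := by
    apply subset_antisymm
    · rintro _ ⟨h, a, -, rfl⟩
      exact ⟨a, by rwa [Set.mem_ofPred_eq, herase_add] at h, rfl⟩
    · rintro _ ⟨a, ha, rfl⟩
      exact ⟨by rwa [Set.mem_ofPred_eq, herase_add],
        a, hU ((erase_le_self a i).trans le_self_add) ha, rfl⟩
  have h0' := h0.translate (Finsupp.single i 1)
  have h1' := h1.translate (Finsupp.single i 1)
  rw [Finsupp.degree_single] at h0' h1'
  rw [← hunion]
  exact h0.union h1' (by rwa [hinter])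

theorem erase_inf_mem {q : σ →₀ ℕ} {i : σ} (hU : IsUpperSet U) (hq : ∀ a ∈ U, a ⊓ q ∈ U)
    {a : σ →₀ ℕ} (ha : a.erase i ∈ U) : (a ⊓ q.erase i).erase i ∈ U := by
  classical
  refine hU (fun j => ?_) (hq _ ha)
  by_cases hj : j = i <;> simp [hj]

theorem inf_tsub_single_add_single_mem {q : σ →₀ ℕ} {i : σ} (hU : IsUpperSet U)
    (hq : ∀ a ∈ U, a ⊓ q ∈ U) (hi : Finsupp.single i 1 ≤ q) {a : σ →₀ ℕ}
    (ha : a + Finsupp.single i 1 ∈ U) :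
    a ⊓ (q - Finsupp.single i 1) + Finsupp.single i 1 ∈ U := by
  refine hU ?_ (hq _ ha)
  calc (a + Finsupp.single i 1) ⊓ q
      = (a + Finsupp.single i 1) ⊓ (q - Finsupp.single i 1 + Finsupp.single i 1) := by
        rw [tsub_add_cancel_of_le hi]
    _ ≤ a ⊓ (q - Finsupp.single i 1) + Finsupp.single i 1 := fun j => by
        simp only [Finsupp.inf_apply, Finsupp.add_apply]
        lia

theorem monomialRegLE_of_degree_lt (hU : IsUpperSet U) (q : σ →₀ ℕ) (hq : ∀ a ∈ U, a ⊓ q ∈ U)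
    (hR : ∀ a ∉ U, a ≤ q → a.degree < R) : MonomialRegLE k U R := by
  classical
  induction hN : q.degree using Nat.strong_induction_on generalizing q U R with
  | _ N ih =>
  subst hN
  by_cases h0 : 0 ∈ U
  · rw [Set.eq_univ_of_forall fun a => hU (zero_le (a := a)) h0]
    exact monomialRegLE_univ R
  obtain ⟨R, rfl⟩ := Nat.exists_eq_add_one_of_ne_zero (hR 0 h0 zero_le).ne_bot
  by_cases hq0 : q = 0
  · subst hq0
    have hU0 : U = ∅ := Set.eq_empty_of_forall_notMem fun a ha => h0 (by simpa using hq a ha)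
    rw [hU0]
    exact monomialRegLE_empty _
  obtain ⟨i, hi⟩ := Finsupp.ne_iff.1 hq0
  have hle : Finsupp.single i 1 ≤ q := Finsupp.single_le_iff.2 (Nat.one_le_iff_ne_zero.2 hi)
  have hdeg : (q - Finsupp.single i 1).degree + 1 = q.degree := by
    simpa using congrArg Finsupp.degree (tsub_add_cancel_of_le hle)
  have hdeg' : (q.erase i).degree + q i = q.degree := by
    simpa using congrArg Finsupp.degree (Finsupp.erase_add_single i q)
  have hqi : q i ≠ 0 := hi
  refine .of_slice hU i ?_ ?_
  · refine ih _ (by lia) (fun a b hab ha => hU (erase_le_erase hab i) ha) (q.erase i)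
      (fun a => erase_inf_mem hU hq) ?_ rfl
    · intro a ha haq
      have hai : a i = 0 := by simpa using haq i
      refine hR a ?_ (haq.trans (erase_le_self q i))
      rwa [Set.mem_ofPred_eq, Finsupp.erase_of_notMem_support (by simpa using hai)] at ha
  · refine ih _ (by lia) (fun a b hab ha => hU (add_le_add_left hab _) ha)
      (q - Finsupp.single i 1) (fun a => inf_tsub_single_add_single_mem hU hq hle) ?_ rfl
    · intro a ha haq
      have h := hR _ ha ((add_le_add_left haq _).trans_eq (tsub_add_cancel_of_le hle))
      rw [map_add, Finsupp.degree_single] at h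
      lia

theorem MonomialRegLE.union_Ici (h : MonomialRegLE k U R) {m : σ →₀ ℕ}
    (hcolon : MonomialRegLE k {b | b + m ∈ U} R') (hR' : R' + m.degree ≤ R + 1)
    (hm : m.degree ≤ R) : MonomialRegLE k (U ∪ Set.Ici m) R := by
  have hIci : (· + m) '' Set.univ = Set.Ici m := by
    ext a
    simp [le_iff_exists_add', eq_comm]
  have hinter : (· + m) '' {b | b + m ∈ U} = U ∩ Set.Ici m := by
    rw [← hIci, Set.image_univ, ← Set.image_preimage_eq_inter_range]
    rfl
  refine h.union ?_ ?_
  · rw [← hIci]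
    exact ((monomialRegLE_univ 0).translate m).mono (by lia)
  · rw [← hinter]
    exact (hcolon.translate m).mono hR'

theorem monomialRegLE_of_colon {ι : Type} [LinearOrder ι] (s : Finset ι) (E : ι → σ →₀ ℕ)
    (hE : ∀ c ∈ s, (E c).degree ≤ R)
    (hcolon : ∀ c ∈ s, ∃ R', R' + (E c).degree ≤ R + 1 ∧
      MonomialRegLE k {b | ∃ c' ∈ s, c < c' ∧ E c' ≤ b + E c} R') :
    MonomialRegLE k {a | ∃ c ∈ s, E c ≤ a} R := by
  induction s using Finset.induction_on_min with
  | empty => simpa using monomialRegLE_empty R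
  | insert c s hlt ih =>
    obtain ⟨R', hR', h⟩ := hcolon c (s.mem_insert_self c)
    have hs (b : σ →₀ ℕ) : (∃ c' ∈ insert c s, c < c' ∧ E c' ≤ b + E c) ↔
        ∃ c' ∈ s, E c' ≤ b + E c := by
      constructor
      · rintro ⟨c', hc', hlt', hle⟩
        exact ⟨c', Finset.mem_of_mem_insert_of_ne hc' hlt'.ne', hle⟩
      · rintro ⟨c', hc', hle⟩
        exact ⟨c', Finset.mem_insert_of_mem hc', hlt c' hc', hle⟩
    have ih' := ih (fun c' hc' => hE c' (Finset.mem_insert_of_mem hc')) fun c' hc' => by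
      obtain ⟨R', hR', h⟩ := hcolon c' (Finset.mem_insert_of_mem hc')
      refine ⟨R', hR', ?_⟩
      simpa [(hlt c' hc').not_gt] using h
    have hinsert :
        {a | ∃ c' ∈ insert c s, E c' ≤ a} = {a | ∃ c' ∈ s, E c' ≤ a} ∪ Set.Ici (E c) := by
      ext a
      simp [or_comm]
    simp only [hs] at h
    rw [hinsert]
    exact ih'.union_Ici h hR' (hE c (s.mem_insert_self c))

end MonomialIdeals

section Resolutions

variable {k : Type} [Field k] {σ : Type} {l R : ℕ}

variable (k σ) in
/-- The kernel `N` of a differential of a resolution under construction: a graded submodule of a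
graded free module generated in degrees at most `R`, with `RegLE k σ l _ (R + 1)`. -/
structure Syzygies (l R : ℕ) where
  rank : ℕ
  deg : Fin rank → ℕ
  deg_le : ∀ b, deg b ≤ R
  N : Submodule (MvPolynomial σ k) (Fin rank →₀ MvPolynomial σ k)
  regLE : RegLE k σ l (inducedGrading (freeGrading deg) N) (R + 1)
  iSup_eq_top : ⨆ e, inducedGrading (freeGrading deg) N e = ⊤

theorem RegLE.exists_syzygies {M : Type} [AddCommGroup M] [Module (MvPolynomial σ k) M]
    {𝓜 : ℕ → AddSubgroup M} {N : Submodule (MvPolynomial σ k) M}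
    (h : RegLE k σ l (inducedGrading 𝓜 N) R) (h𝓜 : iSupIndep 𝓜)
    (hN : ⨆ e, inducedGrading 𝓜 N e = ⊤) :
    ∃ (s : Syzygies k σ l R) (φ : (Fin s.rank →₀ MvPolynomial σ k) →ₗ[MvPolynomial σ k] M),
      IsGradedHom (freeGrading s.deg) 𝓜 φ ∧ LinearMap.range φ = N ∧ LinearMap.ker φ = s.N := by
  obtain ⟨r, deg, φ, hdeg, hφ, hker⟩ := h.exists_fin_cover
  have hkerφ : LinearMap.ker (N.subtype ∘ₗ φ) = LinearMap.ker φ :=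
    LinearMap.ker_comp_of_ker_eq_bot _ N.ker_subtype
  have hhom : IsGradedHom (freeGrading deg) 𝓜 (N.subtype ∘ₗ φ) := hφ.isGradedHom
  refine ⟨⟨r, deg, hdeg, LinearMap.ker φ, hker, ?_⟩, N.subtype ∘ₗ φ, hhom, ?_, hkerφ⟩
  · rw [← hkerφ]
    exact hhom.iSup_inducedGrading_ker (iSup_freeGrading deg) h𝓜
  · rw [LinearMap.range_comp_of_range_eq_top _ (LinearMap.range_eq_top.2 (hφ.surjective hN)),
      N.range_subtype]

theorem Syzygies.exists_next (s : Syzygies k σ l R) :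
    ∃ (s' : Syzygies k σ l (R + 1))
      (φ : (Fin s'.rank →₀ MvPolynomial σ k) →ₗ[MvPolynomial σ k] (Fin s.rank →₀ MvPolynomial σ k)),
      IsGradedHom (freeGrading s'.deg) (freeGrading s.deg) φ ∧ LinearMap.range φ = s.N ∧
        LinearMap.ker φ = s'.N :=
  s.regLE.exists_syzygies (iSupIndep_freeGrading s.deg) s.iSup_eq_top

theorem RegLE.exists_gradedFreeRes {I : Ideal (MvPolynomial σ k)}
    (h : RegLE k σ l (inducedGrading polyGrading I) R)
    (hI : ⨆ e, inducedGrading polyGrading I e = ⊤) :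
    ∃ F : GradedFreeRes k σ I, ∀ i b, F.deg i b ≤ R + i := by
  obtain ⟨s, aug, haug, hrange, hker⟩ := h.exists_syzygies iSupIndep_polyGrading hI
  choose next d hd hdrange hdker using fun i => Syzygies.exists_next (k := k) (σ := σ) (l := l)
    (R := R + i)
  let seq (i : ℕ) : Syzygies k σ l (R + i) := Nat.rec s (fun i s => next i s) i
  refine ⟨{
    rk := fun i => (seq i).rank
    deg := fun i => (seq i).deg
    aug := aug
    d := fun i => d i (seq i)
    aug_range := hrange
    exact_zero := (hdrange 0 s).trans hker.symm
    exact_succ := fun i => (hdrange (i + 1) (seq (i + 1))).trans (hdker i (seq i)).symm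
    aug_graded := fun b => haug (basis_mem_freeGrading _ b)
    d_graded := fun i b c => ?_ }, fun i b => (seq i).deg_le b⟩
  obtain h0 | ⟨m, hm, hhom⟩ :=
    isHomogeneous_apply_of_mem_freeGrading (hd i (seq i) (basis_mem_freeGrading _ b)) c
  · exact Or.inl h0
  · exact Or.inr ⟨m, hm.symm.trans (add_comm _ _), hhom⟩

end Resolutions

section RegularSequences

variable {A G H : Type} [CommRing A] [AddCommGroup G] [Module A G] [AddCommGroup H] [Module A H]
  {n : ℕ} {x : Fin n → A} {j : ℕ} {M : Submodule A H} {D : G →ₗ[A] H}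

/-- The ideal generated by the first `j` members of the sequence `x`. -/
def initialIdeal (x : Fin n → A) (j : ℕ) : Ideal A :=
  Ideal.span (x '' {i | (i : ℕ) < j})

/-- The first `j` members of the sequence `x` form a weakly regular sequence on the submodule `M`.
The condition is phrased inside `M`, without passing to quotients. -/
def IsWeaklyRegularUpTo (x : Fin n → A) (j : ℕ) (M : Submodule A H) : Prop :=
  ∀ i : Fin n, (i : ℕ) < j → ∀ m ∈ M,
    x i • m ∈ initialIdeal x i • M → m ∈ initialIdeal x i • M

/-- The class of `a` is a nonzero element of `M` modulo the first `j` members of `x` that is killed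
by the whole sequence `x`. -/
structure IsSocleElement (x : Fin n → A) (j : ℕ) (M : Submodule A H) (a : H) : Prop where
  mem : a ∈ M
  notMem : a ∉ initialIdeal x j • M
  smul_mem : ∀ i, x i • a ∈ initialIdeal x j • M

theorem initialIdeal_zero (x : Fin n → A) : initialIdeal x 0 = ⊥ := by
  simp [initialIdeal]

theorem initialIdeal_succ (x : Fin n → A) (i : Fin n) :
    initialIdeal x (i + 1) = initialIdeal x i ⊔ Ideal.span {x i} := by
  have h : {l : Fin n | (l : ℕ) < i + 1} = {l : Fin n | (l : ℕ) < i} ∪ {i} := by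
    ext l
    simp only [Set.mem_ofPred_eq, Set.mem_union, Set.mem_singleton_iff, Fin.ext_iff]
    omega
  rw [initialIdeal, h, Set.image_union, Set.image_singleton, Ideal.span_union, initialIdeal]

theorem mem_initialIdeal_succ_smul (i : Fin n) {y : H} :
    y ∈ initialIdeal x (i + 1) • M ↔ ∃ c ∈ initialIdeal x i • M, ∃ m ∈ M, c + x i • m = y := by
  rw [initialIdeal_succ, Submodule.sup_smul, Submodule.ideal_span_singleton_smul,
    Submodule.mem_sup]
  simp only [Submodule.mem_smul_pointwise_iff_exists, exists_exists_and_eq_and]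

theorem mem_smul_range_iff {I : Ideal A} {y : H} :
    y ∈ I • LinearMap.range D ↔ ∃ g ∈ I • (⊤ : Submodule A G), D g = y := by
  rw [← Submodule.map_top, ← Submodule.map_smul'', Submodule.mem_map]

theorem isWeaklyRegularUpTo_zero (x : Fin n → A) (M : Submodule A H) :
    IsWeaklyRegularUpTo x 0 M :=
  fun _ hi => absurd hi (Nat.not_lt_zero _)

theorem IsWeaklyRegularUpTo.mem_smul_ker (h : IsWeaklyRegularUpTo x j (LinearMap.range D))
    {l : ℕ} (hln : l ≤ n) (hlj : l ≤ j) {f : G} (hf : f ∈ initialIdeal x l • (⊤ : Submodule A G))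
    (hDf : D f = 0) : f ∈ initialIdeal x l • LinearMap.ker D := by
  induction l generalizing f with
  | zero =>
    rw [initialIdeal_zero, Submodule.bot_smul, Submodule.mem_bot] at hf
    exact hf ▸ zero_mem _
  | succ l ih =>
    obtain ⟨i, rfl⟩ : ∃ i : Fin n, (i : ℕ) = l := ⟨⟨l, hln⟩, rfl⟩
    obtain ⟨g, hg, y, -, rfl⟩ := (mem_initialIdeal_succ_smul i).1 hf
    have hXy : x i • D y = D (-g) := by
      rw [map_neg, eq_neg_iff_add_eq_zero, add_comm, ← map_smul, ← map_add, hDf]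
    obtain ⟨z, hz, hDz⟩ := mem_smul_range_iff.1 <| h i hlj (D y) ⟨y, rfl⟩ <|
      hXy ▸ mem_smul_range_iff.2 ⟨-g, neg_mem hg, rfl⟩
    refine (mem_initialIdeal_succ_smul i).2 ⟨g + x i • z, ?_, y - z, ?_, ?_⟩
    · refine ih i.2.le (by omega) (add_mem hg (Submodule.smul_mem _ _ hz)) ?_
      rw [map_add, map_smul, hDz, ← map_smul, ← map_add, hDf]
    · rw [LinearMap.mem_ker, map_sub, hDz, sub_self]
    · rw [smul_sub]
      abel

theorem IsWeaklyRegularUpTo.ker (h : IsWeaklyRegularUpTo x j (LinearMap.range D))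
    (hG : IsWeaklyRegularUpTo x (j + 1) (⊤ : Submodule A G)) :
    IsWeaklyRegularUpTo x (j + 1) (LinearMap.ker D) :=
  fun i hi m hm hXm => h.mem_smul_ker i.2.le (by omega)
    (hG i hi m trivial (Submodule.smul_mono le_rfl le_top hXm)) hm

theorem IsSocleElement.ker {i : Fin n} (h : IsWeaklyRegularUpTo x i (LinearMap.range D))
    (hG : IsWeaklyRegularUpTo x (i + 1) (⊤ : Submodule A G)) {a f : G}
    (ha : IsSocleElement x i (LinearMap.range D) (D a))
    (hf : f ∈ initialIdeal x i • (⊤ : Submodule A G)) (hDf : D f = x i • D a) :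
    IsSocleElement x (i + 1) (LinearMap.ker D) (x i • a - f) := by
  have hker : D (x i • a - f) = 0 := by rw [map_sub, map_smul, hDf, sub_self]
  refine ⟨hker, fun hmem => ha.notMem ?_, fun l => ?_⟩
  · obtain ⟨c, hc, d, hd, hcd⟩ := (mem_initialIdeal_succ_smul i).1 hmem
    refine mem_smul_range_iff.2 ⟨a - d, hG i (Nat.lt_succ_self _) _ trivial ?_, ?_⟩
    · have : x i • (a - d) = f + c := by
        rw [smul_sub, sub_eq_iff_eq_add, add_assoc, hcd]
        abel
      exact this ▸ add_mem hf (Submodule.smul_mono le_rfl le_top hc)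
    · rw [map_sub, LinearMap.mem_ker.1 hd, sub_zero]
  · obtain ⟨g, hg, hDg⟩ := mem_smul_range_iff.1 (ha.smul_mem l)
    have hd : D (x l • a - g) = 0 := by rw [map_sub, map_smul, hDg, sub_self]
    have hsum : x i • g - x l • f + x i • (x l • a - g) = x l • (x i • a - f) := by
      rw [smul_sub, smul_sub, smul_comm (x l)]
      abel
    refine (mem_initialIdeal_succ_smul i).2 ⟨_, h.mem_smul_ker i.2.le le_rfl ?_ ?_, _, hd, hsum⟩
    · exact sub_mem (Submodule.smul_mem _ _ hg) (Submodule.smul_mem _ _ hf)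
    · rw [map_sub, map_smul, map_smul, hDg, hDf, smul_comm, sub_self]

theorem isSocleElement_mk {I : Ideal A} {p : A} (hp : p ∉ I) (hx : ∀ i, x i * p ∈ I) :
    IsSocleElement x 0 (LinearMap.range (Submodule.mkQ I)) (Submodule.mkQ I p) := by
  refine ⟨⟨p, rfl⟩, ?_, fun i => ?_⟩
  · rwa [initialIdeal_zero, Submodule.bot_smul, Submodule.mem_bot, Submodule.mkQ_apply,
      Submodule.Quotient.mk_eq_zero]
  · rw [initialIdeal_zero, Submodule.bot_smul, Submodule.mem_bot, ← map_smul, Submodule.mkQ_apply,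
      Submodule.Quotient.mk_eq_zero]
    exact hx i

theorem mem_smul_top_finsupp_iff {κ : Type} {I : Ideal A} {f : κ →₀ A} :
    f ∈ I • (⊤ : Submodule A (κ →₀ A)) ↔ ∀ b, f b ∈ I := by
  refine ⟨fun h b => ?_, fun h => ?_⟩
  · induction h using Submodule.smul_induction_on' with
    | smul r hr y _ => exact I.mul_mem_right _ hr
    | add y _ z _ hy hz => exact I.add_mem hy hz
  · rw [← Finsupp.sum_single f]
    refine sum_mem fun b _ => ?_
    rw [← mul_one (f b), ← smul_eq_mul, ← Finsupp.smul_single]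
    exact Submodule.smul_mem_smul (h b) trivial

theorem IsWeaklyRegularUpTo.finsupp {κ : Type}
    (h : IsWeaklyRegularUpTo x j (⊤ : Submodule A A)) :
    IsWeaklyRegularUpTo x j (⊤ : Submodule A (κ →₀ A)) := by
  intro i hi f _ hf
  rw [mem_smul_top_finsupp_iff] at hf ⊢
  intro b
  simpa using h i hi (f b) trivial (by simpa using hf b)

end RegularSequences

section Variables

variable {k : Type} [CommRing k] {n : ℕ}

theorem mem_initialIdeal_X_iff {j : ℕ} {p : MvPolynomial (Fin n) k} :
    p ∈ initialIdeal X j ↔ ∀ s, coeff s p ≠ 0 → ∃ i : Fin n, (i : ℕ) < j ∧ s i ≠ 0 := by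
  simp only [initialIdeal, mem_ideal_span_X_image, mem_support_iff, Set.mem_ofPred_eq]

theorem isWeaklyRegularUpTo_X (j : ℕ) :
    IsWeaklyRegularUpTo X j (⊤ : Submodule (MvPolynomial (Fin n) k) (MvPolynomial (Fin n) k)) := by
  intro i _ p _ hp
  rw [smul_eq_mul, Ideal.mul_top, mem_initialIdeal_X_iff] at hp ⊢
  intro s hs
  obtain ⟨l, hl, hne⟩ := hp (Finsupp.single i 1 + s) (by rwa [smul_eq_mul, coeff_X_mul])
  refine ⟨l, hl, ?_⟩
  rwa [Finsupp.add_apply, Finsupp.single_eq_of_ne (Fin.ne_of_lt hl), zero_add] at hne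

theorem homogeneousComponent_mem_initialIdeal_X {j : ℕ} (e : ℕ) {p : MvPolynomial (Fin n) k}
    (hp : p ∈ initialIdeal X j) : homogeneousComponent e p ∈ initialIdeal X j := by
  rw [mem_initialIdeal_X_iff] at hp ⊢
  intro s hs
  rw [coeff_homogeneousComponent, ne_eq, ite_eq_right_iff, Classical.not_imp] at hs
  exact hp s hs.2

end Variables

section HomogeneousPreimages

variable {k : Type} [CommRing k] {σ : Type} {M N : Type} [AddCommGroup M]
  [Module (MvPolynomial σ k) M] [AddCommGroup N] [Module (MvPolynomial σ k) N]
  {𝓜 : ℕ → AddSubgroup M} {𝓝 : ℕ → AddSubgroup N} {φ : M →ₗ[MvPolynomial σ k] N}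

theorem iSup_inducedGrading_smul_top {κ : Type} (deg : κ → ℕ) {I : Ideal (MvPolynomial σ k)}
    (hI : ∀ e, ∀ p ∈ I, homogeneousComponent e p ∈ I) :
    ⨆ e, inducedGrading (freeGrading deg)
      (I • ⊤ : Submodule (MvPolynomial σ k) (κ →₀ MvPolynomial σ k)) e = ⊤ := by
  refine eq_top_iff.2 fun ⟨f, hf⟩ _ => ?_
  have hmem (b e) : Finsupp.single b (homogeneousComponent e (f b)) ∈
      (I • ⊤ : Submodule (MvPolynomial σ k) (κ →₀ MvPolynomial σ k)) := by
    classical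
    refine mem_smul_top_finsupp_iff.2 fun c => ?_
    rw [Finsupp.single_apply]
    split_ifs
    · exact hI e _ (mem_smul_top_finsupp_iff.1 hf b)
    · exact zero_mem _
  have hsum : (⟨f, hf⟩ : ↥(I • ⊤ : Submodule (MvPolynomial σ k) (κ →₀ MvPolynomial σ k))) =
      ∑ b ∈ f.support, ∑ e ∈ Finset.range ((f b).totalDegree + 1), ⟨_, hmem b e⟩ := by
    refine Subtype.ext ?_
    simp only [AddSubmonoidClass.coe_finsetSum, ← Finsupp.single_finsetSum,
      sum_homogeneousComponent]
    exact f.sum_single.symm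
  rw [hsum]
  exact sum_mem fun b _ => sum_mem fun e _ => AddSubgroup.mem_iSup_of_mem _
    (single_mem_freeGrading deg (homogeneousComponent_isHomogeneous e (f b)))

theorem IsGradedHom.exists_homogeneous_preimage (hφ : IsGradedHom 𝓜 𝓝 φ) (h𝓝 : iSupIndep 𝓝)
    {L : Submodule (MvPolynomial σ k) M} (hL : ⨆ e, inducedGrading 𝓜 L e = ⊤) {e : ℕ} {y : N}
    (hy : y ∈ 𝓝 e) (hyL : ∃ x ∈ L, φ x = y) : ∃ x ∈ L, x ∈ 𝓜 e ∧ φ x = y := by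
  obtain ⟨x, hx, rfl⟩ := hyL
  have hmem : (⟨x, hx⟩ : L) ∈ inducedGrading 𝓜 L e ⊔ ⨆ (j) (_ : j ≠ e), inducedGrading 𝓜 L j := by
    rw [← iSup_split_single _ e, hL]
    trivial
  obtain ⟨a, ha, b, hb, hab⟩ := AddSubgroup.mem_sup.1 hmem
  refine ⟨a, a.2, ha, ?_⟩
  have hle : ⨆ (j) (_ : j ≠ e), inducedGrading 𝓜 L j ≤
      (⨆ (j) (_ : j ≠ e), 𝓝 j).comap (φ ∘ₗ L.subtype).toAddMonoidHom :=
    iSup₂_le fun j hj z hz => AddSubgroup.mem_iSup_of_mem j (AddSubgroup.mem_iSup_of_mem hj (hφ hz))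
  have hφab : φ x = φ a + φ b := by rw [← map_add, ← Submodule.coe_add, hab]
  have hφb : φ b ∈ 𝓝 e := by
    rw [← add_sub_cancel_left (φ a) (φ b), ← hφab]
    exact sub_mem hy (hφ ha)
  rw [hφab, (AddSubgroup.disjoint_def.1 (h𝓝 e)) hφb (hle hb), add_zero]

end HomogeneousPreimages

section HomogeneousSocleElements

variable {k : Type} [CommRing k] {n : ℕ} {κ : Type} {deg : κ → ℕ} {e : ℕ}
  {H : Type} [AddCommGroup H] [Module (MvPolynomial (Fin n) k) H] {𝓗 : ℕ → AddSubgroup H}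
  {D : (κ →₀ MvPolynomial (Fin n) k) →ₗ[MvPolynomial (Fin n) k] H}

theorem IsGradedHom.exists_preimage_mem_initialIdeal_smul (hD : IsGradedHom (freeGrading deg) 𝓗 D)
    (h𝓗 : iSupIndep 𝓗) {j : ℕ} {y : H} (hy : y ∈ 𝓗 e)
    (hyD : y ∈ initialIdeal (X : Fin n → MvPolynomial (Fin n) k) j • LinearMap.range D) :
    ∃ f ∈ initialIdeal (X : Fin n → MvPolynomial (Fin n) k) j •
      (⊤ : Submodule (MvPolynomial (Fin n) k) (κ →₀ MvPolynomial (Fin n) k)),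
      f ∈ freeGrading deg e ∧ D f = y :=
  hD.exists_homogeneous_preimage h𝓗
    (iSup_inducedGrading_smul_top deg fun _ _ => homogeneousComponent_mem_initialIdeal_X _) hy
    (mem_smul_range_iff.1 hyD)

theorem IsGradedHom.exists_preimage_of_mem_range (hD : IsGradedHom (freeGrading deg) 𝓗 D)
    (h𝓗 : iSupIndep 𝓗) {y : H} (hy : y ∈ 𝓗 e) (hyD : y ∈ LinearMap.range D) :
    ∃ f ∈ freeGrading deg e, D f = y := by
  obtain ⟨f, hf⟩ := hyD
  obtain ⟨a, -, ha, hDa⟩ := hD.exists_homogeneous_preimage h𝓗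
    (iSup_inducedGrading_smul_top deg fun _ _ _ => Submodule.mem_top) hy
    ⟨f, by rw [Submodule.top_smul]; trivial, hf⟩
  exact ⟨a, ha, hDa⟩

theorem IsSocleElement.exists_ker {i : Fin n} {a : H}
    (h𝓗 : iSupIndep 𝓗) (hmod : IsGradedModule k (Fin n) 𝓗)
    (hD : IsGradedHom (freeGrading deg) 𝓗 D)
    (hreg : IsWeaklyRegularUpTo X i (LinearMap.range D))
    (ha : IsSocleElement X i (LinearMap.range D) a) (hae : a ∈ 𝓗 e) :
    ∃ a' ∈ freeGrading deg (e + 1), IsSocleElement X (i + 1) (LinearMap.ker D) a' := by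
  obtain ⟨a', ha', rfl⟩ := hD.exists_preimage_of_mem_range h𝓗 hae ha.mem
  have hXa : (X i : MvPolynomial (Fin n) k) • D a' ∈ 𝓗 (e + 1) :=
    add_comm 1 e ▸ hmod (isHomogeneous_X k i) hae
  obtain ⟨f, hf, hfe, hDf⟩ := hD.exists_preimage_mem_initialIdeal_smul h𝓗 hXa (ha.smul_mem i)
  refine ⟨X i • a' - f, sub_mem ?_ hfe, ha.ker hreg (isWeaklyRegularUpTo_X _).finsupp hf hDf⟩
  exact add_comm 1 e ▸ isGradedModule_freeGrading deg (isHomogeneous_X k i) ha'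

theorem IsSocleElement.exists_deg_eq {a : H} (h𝓗 : iSupIndep 𝓗)
    (hD : IsGradedHom (freeGrading deg) 𝓗 D)
    (ha : IsSocleElement X n (LinearMap.range D) a) (hae : a ∈ 𝓗 e) : ∃ b, deg b = e := by
  by_contra! hdeg
  obtain ⟨f, hf, rfl⟩ := hD.exists_preimage_of_mem_range h𝓗 hae ha.mem
  refine ha.notMem (mem_smul_range_iff.2 ⟨f, mem_smul_top_finsupp_iff.2 fun b => ?_, rfl⟩)
  refine mem_initialIdeal_X_iff.2 fun s hs => ?_
  have hs0 : s ≠ 0 := by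
    rintro rfl
    exact hdeg b (by simpa using hf b 0 hs)
  obtain ⟨i, hi⟩ := Finsupp.ne_iff.1 hs0
  exact ⟨i, i.2, hi⟩

end HomogeneousSocleElements

section LowerBound

variable {k : Type} [Field k] {n : ℕ} {e : ℕ}

theorem isGradedHom_aug {I : Ideal (MvPolynomial (Fin n) k)} (F : GradedFreeRes k (Fin n) I) :
    IsGradedHom (freeGrading (F.deg 0)) polyGrading F.aug :=
  isGradedHom_freeGrading isGradedModule_polyGrading F.aug_graded

theorem isGradedHom_d {I : Ideal (MvPolynomial (Fin n) k)} (F : GradedFreeRes k (Fin n) I)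
    (i : ℕ) : IsGradedHom (freeGrading (F.deg (i + 1))) (freeGrading (F.deg i)) (F.d i) := by
  refine isGradedHom_freeGrading (isGradedModule_freeGrading _) fun b c s hs => ?_
  obtain h0 | ⟨m, hm, hhom⟩ := F.d_graded i b c
  · simp [h0] at hs
  · rw [isHomogeneous_iff_forall_coeff.1 hhom s hs, hm, add_comm]

theorem exists_isSocleElement_range_d {I : Ideal (MvPolynomial (Fin n) k)}
    (F : GradedFreeRes k (Fin n) I) (hreg : IsWeaklyRegularUpTo X 1 I)
    {a : MvPolynomial (Fin n) k} (ha : IsSocleElement X 1 I a) (hae : a.IsHomogeneous e)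
    {i : ℕ} (hi : i + 2 ≤ n) :
    IsWeaklyRegularUpTo X (i + 2) (LinearMap.range (F.d i)) ∧
      ∃ a' ∈ freeGrading (F.deg i) (e + i + 1),
        IsSocleElement X (i + 2) (LinearMap.range (F.d i)) a' := by
  induction i with
  | zero =>
    rw [← F.aug_range] at hreg ha
    rw [F.exact_zero]
    exact ⟨hreg.ker (isWeaklyRegularUpTo_X _).finsupp, ha.exists_ker (i := ⟨1, hi⟩)
      iSupIndep_polyGrading isGradedModule_polyGrading (isGradedHom_aug F) hreg hae⟩
  | succ i ih =>
    obtain ⟨hreg', a', hae', ha'⟩ := ih (by omega)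
    rw [F.exact_succ]
    exact ⟨hreg'.ker (isWeaklyRegularUpTo_X _).finsupp, ha'.exists_ker (i := ⟨i + 2, hi⟩)
      (iSupIndep_freeGrading _) (isGradedModule_freeGrading _) (isGradedHom_d F i) hreg' hae'⟩

theorem exists_deg_eq_of_socle (hn : 0 < n) {I : Ideal (MvPolynomial (Fin n) k)}
    {p : MvPolynomial (Fin n) k} (hp : p ∉ I) (hXp : ∀ i, X i * p ∈ I) (hpe : p.IsHomogeneous e)
    (F : GradedFreeRes k (Fin n) I) : ∃ b, F.deg (n - 1) b = e + n := by
  have hreg : IsWeaklyRegularUpTo X 1 I := by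
    have h := (isWeaklyRegularUpTo_zero X (LinearMap.range (Submodule.mkQ I))).ker
      (isWeaklyRegularUpTo_X 1)
    rwa [Submodule.ker_mkQ] at h
  have hsoc : IsSocleElement X 1 I (X ⟨0, hn⟩ * p) := by
    have h := (isSocleElement_mk hp hXp).ker (i := ⟨0, hn⟩) (isWeaklyRegularUpTo_zero X _)
      (isWeaklyRegularUpTo_X 1) (zero_mem _) (f := 0) (by
        rw [map_zero, ← map_smul]
        exact ((Submodule.Quotient.mk_eq_zero I).2 (hXp _)).symm)
    rwa [Submodule.ker_mkQ, sub_zero] at h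
  have hdeg : (X ⟨0, hn⟩ * p : MvPolynomial (Fin n) k).IsHomogeneous (e + 1) :=
    add_comm 1 e ▸ (isHomogeneous_X k _).mul hpe
  obtain ⟨m, rfl⟩ : ∃ m, n = m + 1 := ⟨n - 1, by omega⟩
  cases m with
  | zero =>
    rw [← F.aug_range] at hsoc
    exact hsoc.exists_deg_eq iSupIndep_polyGrading (isGradedHom_aug F) hdeg
  | succ m =>
    obtain ⟨-, a, hae, ha⟩ := exists_isSocleElement_range_d F hreg hsoc hdeg le_rfl
    rw [show e + (m + 1 + 1) = e + 1 + m + 1 by omega]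
    exact ha.exists_deg_eq (iSupIndep_freeGrading _) (isGradedHom_d F m) hae

theorem betti_ne_zero_of_socle (hn : 0 < n) {I : Ideal (MvPolynomial (Fin n) k)}
    {p : MvPolynomial (Fin n) k} (hp : p ∉ I) (hXp : ∀ i, X i * p ∈ I) (hpe : p.IsHomogeneous e)
    (F : GradedFreeRes k (Fin n) I) : betti k (Fin n) I (n - 1) (e + n) ≠ 0 := by
  obtain ⟨F', hF'⟩ := Nat.sInf_mem (s := {r | ∃ F : GradedFreeRes k (Fin n) I,
    r = (Finset.univ.filter fun b => F.deg (n - 1) b = e + n).card}) ⟨_, F, rfl⟩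
  obtain ⟨b, hb⟩ := exists_deg_eq_of_socle hn hp hXp hpe F'
  rw [betti, hF']
  exact Finset.card_ne_zero_of_mem (a := b) (by simpa using hb)

end LowerBound

section Regularity

variable {k : Type} [Field k] {σ : Type}

theorem betti_eq_zero_of_forall_deg_ne {I : Ideal (MvPolynomial σ k)} (F : GradedFreeRes k σ I)
    {i j : ℕ} (h : ∀ b, F.deg i b ≠ j) : betti k σ I i j = 0 := by
  refine Nat.le_zero.1 (Nat.sInf_le ⟨F, ?_⟩)
  rw [Finset.filter_false_of_mem fun b _ => h b, Finset.card_empty]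

theorem reg_eq_of_socle {n : ℕ} (hn : 0 < n) {I : Ideal (MvPolynomial (Fin n) k)}
    (hI : ∀ e, ∀ p ∈ I, homogeneousComponent e p ∈ I) {l e : ℕ}
    (hreg : RegLE k (Fin n) l (inducedGrading polyGrading I) (e + 1))
    {p : MvPolynomial (Fin n) k} (hp : p ∉ I) (hXp : ∀ i, X i * p ∈ I)
    (hpe : p.IsHomogeneous e) : reg k (Fin n) I = e + 1 := by
  obtain ⟨F, hF⟩ := hreg.exists_gradedFreeRes (iSup_inducedGrading_polyGrading hI)
  refine IsGreatest.csSup_eq ⟨⟨n - 1, e + n, betti_ne_zero_of_socle hn hp hXp hpe F, by omega⟩, ?_⟩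
  rintro r ⟨i, j, hb, rfl⟩
  by_contra! hlt
  refine hb (betti_eq_zero_of_forall_deg_ne F fun b => ?_)
  have := hF i b
  omega

end Regularity

section PartialSums

theorem sum_add_sum_max_le_max {ε : ℕ → ℤ} {m : ℕ}
    (h : ∀ j < m, 0 < ε j → ε (j + 1) ≤ 1 - 2 * ε j) :
    ∑ i ∈ Finset.range (m + 1), ε i + ∑ i ∈ Finset.range m, max (ε i - 1) 0 ≤ max (ε m) 0 := by
  induction m with
  | zero => simp
  | succ m ih =>
    have hm := ih fun j hj => h j (by omega)
    have hstep := h m (by omega)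
    rw [Finset.sum_range_succ ε, Finset.sum_range_succ fun i => max (ε i - 1) 0]
    omega

theorem max_le_sum {u : ℕ → ℤ} {m : ℕ} (h0 : 0 ≤ u 0)
    (h : ∀ j < m, 0 ≤ u (j + 1) ∨ u (j + 1) = -1 ∧ 0 < u j) :
    max (u m) 0 ≤ ∑ i ∈ Finset.range (m + 1), u i := by
  induction m with
  | zero => simp [h0]
  | succ m ih =>
    have hm := ih fun j hj => h j (by omega)
    have hstep := h m (by omega)
    rw [Finset.sum_range_succ]
    omega

end PartialSums

section Exchanges

variable {n p l j : ℕ} {w c b : ℕ → ℕ} {δ : ℕ → ℤ}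

/-- Adding `δ` to the multiplicities `c` yields another nonnegative vector with the same sum, larger
than `c` in the colexicographic order with `p` as the decisive position, and the product of
generators `L_i = x_{i-1} x_i ^ (w i)` with multiplicities `c + δ` divides `x ^ b` times the product
with multiplicities `c`. Indices run through `ℕ`, with `n` standing for `0`. -/
structure Exchange (n : ℕ) (w c b : ℕ → ℕ) (δ : ℕ → ℤ) (p : ℕ) : Prop where
  lt : p < n
  cyclic : δ n = δ 0
  sum_eq_zero : ∑ i ∈ Finset.range (p + 1), δ i = 0
  pos : 0 < δ p
  eq_zero : ∀ i, p < i → i < n → δ i = 0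
  nonneg : ∀ i < n, 0 ≤ c i + δ i
  le : ∀ i < n, w i * δ i + δ (i + 1) ≤ b i

/-- Some exchange vector exists. For fixed `c`, the exponents `b` with this property are those of
the colon ideal of the products of generators colexicographically above `c` by the product with
multiplicities `c`. -/
def Exchangeable (n : ℕ) (w c b : ℕ → ℕ) : Prop :=
  ∃ δ p, Exchange n w c b δ p

/-- The difference vector that moves one unit from position `l` to position `p`, with the value at
`0` repeated at `n`. -/
def swapVector (n l p i : ℕ) : ℤ :=
  (if i = p then 1 else 0) - if i = l ∨ l = 0 ∧ i = n then 1 else 0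

theorem sum_swapVector (hlp : l < p) (hp : p < n) :
    ∑ i ∈ Finset.range (p + 1), swapVector n l p i = 0 := by
  have hcongr : ∀ i ∈ Finset.range (p + 1),
      swapVector n l p i = (if i = p then 1 else 0) - if i = l then 1 else 0 := by
    intro i hi
    rw [Finset.mem_range] at hi
    have hiff : (i = l ∨ l = 0 ∧ i = n) ↔ i = l := by omega
    simp only [swapVector, hiff]
  rw [Finset.sum_congr rfl hcongr, Finset.sum_sub_distrib, Finset.sum_ite_eq', Finset.sum_ite_eq',
    if_pos (Finset.mem_range.2 (by omega)), if_pos (Finset.mem_range.2 (by omega)), sub_self]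

theorem exchangeable_of_swap (hw : ∀ i, 0 < w i) (hl : 0 < c l) (hlp : l < p) (hp : p < n)
    (hbp : w p ≤ b p ∨ w p ≤ b p + 1 ∧ p + 1 = n ∧ l = 0) (hb : 1 ≤ b (p - 1) ∨ l + 1 = p) :
    Exchangeable n w c b := by
  have hp1 : swapVector n l p p = 1 := by
    unfold swapVector
    split_ifs <;> omega
  have hl1 : swapVector n l p l = -1 := by
    unfold swapVector
    split_ifs <;> omega
  have hzero (i : ℕ) (hi : i < n) (hip : i ≠ p) (hil : i ≠ l) : swapVector n l p i = 0 := by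
    unfold swapVector
    split_ifs <;> omega
  have hcyclic : swapVector n l p n = swapVector n l p 0 := by
    unfold swapVector
    split_ifs <;> omega
  refine ⟨swapVector n l p, p, hp, hcyclic, sum_swapVector hlp hp, hp1 ▸ one_pos,
    fun i hi hin => hzero i hin (by omega) (by omega), fun i hi => ?_, fun i hi => ?_⟩
  · rcases eq_or_ne i p with rfl | hip
    · omega
    rcases eq_or_ne i l with rfl | hil
    · omega
    · rw [hzero i hi hip hil]
      omega
  · have hwi := hw i
    rcases eq_or_ne i p with rfl | hip
    · rw [hp1, swapVector]
      split_ifs <;> omega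
    rcases eq_or_ne i l with rfl | hil
    · rw [hl1, swapVector]
      split_ifs <;> omega
    · rw [hzero i hi hip hil, swapVector]
      obtain rfl | hne : i = p - 1 ∨ i + 1 ≠ p := by omega
      all_goals split_ifs <;> omega

/-- A bound for the exponents of the generators of the colon ideal described by `Exchangeable`. -/
def exchangeCap (n : ℕ) (w c : ℕ → ℕ) (i : ℕ) : ℕ :=
  if ∀ l < i, c l = 0 then 0 else if i + 1 = n ∧ 0 < c 0 ∧ c (n - 2) = 0 then w i - 1 else w i

theorem exchangeCap_le (n : ℕ) (w c : ℕ → ℕ) (i : ℕ) : exchangeCap n w c i ≤ w i := by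
  unfold exchangeCap
  split_ifs <;> omega

theorem exchangeCap_eq_zero {i : ℕ} (h : ∀ l < i, c l = 0) : exchangeCap n w c i = 0 :=
  if_pos h

theorem exchangeCap_of_pos {i : ℕ} (hl : 0 < c l) (hli : l < i) :
    exchangeCap n w c i = if i + 1 = n ∧ 0 < c 0 ∧ c (n - 2) = 0 then w i - 1 else w i :=
  if_neg fun h => hl.ne' (h l hli)

theorem exchangeable_inf_cap_of_swap (hw : ∀ i, 0 < w i) (hl : 0 < c l) (hlp : l < p) (hp : p < n)
    (hbp : w p ≤ b p ∧ exchangeCap n w c p = w p ∨ w p ≤ b p + 1 ∧ p + 1 = n ∧ l = 0)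
    (hb : 1 ≤ b (p - 1) ∨ l + 1 = p) :
    Exchangeable n w c fun i => min (b i) (exchangeCap n w c i) := by
  refine exchangeable_of_swap hw hl hlp hp ?_ ?_
  · have hcap := exchangeCap_of_pos (n := n) (w := w) hl hlp
    split_ifs at hcap <;> omega
  · refine or_iff_not_imp_right.2 fun hne => ?_
    have hcap := exchangeCap_of_pos (n := n) (w := w) (i := p - 1) hl (by omega)
    rw [if_neg (by omega)] at hcap
    have hwp := hw (p - 1)
    omega

theorem le_one_sub_two_mul_of_mul_add_lt {W d e : ℤ} (hW : 2 ≤ W) (hd : 0 < d) (h : W * d + e < W) :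
    e ≤ 1 - 2 * d := by
  have : 0 ≤ (W - 2) * (d - 1) := mul_nonneg (by omega) (by omega)
  linarith

namespace Exchange

theorem pos_of_neg (h : Exchange n w c b δ p) (hl : l < n) (hδ : δ l < 0) : 0 < c l := by
  have := h.nonneg l hl
  omega

theorem exists_neg (h : Exchange n w c b δ p) : ∃ l < p, δ l < 0 := by
  by_contra! hno
  have hsum := h.sum_eq_zero
  rw [Finset.sum_range_succ] at hsum
  have hpos := h.pos
  have := Finset.sum_nonneg fun i hi => hno i (Finset.mem_range.1 hi)
  omega

theorem one_le_of_nonneg (h : Exchange n w c b δ p) {i : ℕ} (hi : i < n) (hδ : 0 ≤ δ i)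
    (hδ' : 0 < δ (i + 1)) : 1 ≤ b i := by
  have hle := h.le i hi
  have := mul_nonneg (Int.natCast_nonneg (w i)) hδ
  omega

theorem inf_cap_of_weight_le (hw : ∀ i, 0 < w i) (h : Exchange n w c b δ p) (hj : j < n)
    (hδj : 0 < δ j) (hbj : w j ≤ b j) (hl : 0 < c l) (hlj : l < j) :
    Exchangeable n w c fun i => min (b i) (exchangeCap n w c i) := by
  obtain ⟨i, rfl⟩ : ∃ i, j = i + 1 := ⟨j - 1, by omega⟩
  by_cases hcap : exchangeCap n w c (i + 1) = w (i + 1)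
  · rcases lt_or_ge (δ i) 0 with hδ | hδ
    · exact exchangeable_inf_cap_of_swap hw (h.pos_of_neg (by omega) hδ) (Nat.lt_succ_self i) hj
        (Or.inl ⟨hbj, hcap⟩) (Or.inr rfl)
    · exact exchangeable_inf_cap_of_swap hw hl hlj hj (Or.inl ⟨hbj, hcap⟩)
        (Or.inl (h.one_le_of_nonneg (by omega) hδ hδj))
  · rw [exchangeCap_of_pos hl hlj, ite_eq_right_iff, Classical.not_imp] at hcap
    obtain ⟨⟨rfl, hc0, hci⟩, -⟩ := hcap
    have hδ : 0 ≤ δ i := by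
      by_contra! hneg
      exact (h.pos_of_neg (by omega) hneg).ne' hci
    exact exchangeable_inf_cap_of_swap hw (p := i + 1) hc0 (Nat.succ_pos i) hj
      (Or.inr ⟨by omega, rfl, rfl⟩) (Or.inl (h.one_le_of_nonneg (by omega) hδ hδj))

theorem le_one_of_tight (hw : ∀ i, 2 ≤ w i) (h : Exchange n w c b δ p) (hp : p + 1 = n)
    (hδ0 : δ 0 < 0) (htight : ∀ j, 0 < j → j ≤ p → 0 < δ j → w j * δ j + δ (j + 1) < w j) :
    δ 0 = -1 ∧ δ p = 1 ∧ ∀ j, 0 < j → j ≤ p → δ j ≤ 1 := by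
  have hsucc (j : ℕ) (hj : 0 < j) (hjp : j ≤ p) (hδj : 0 < δ j) : δ (j + 1) ≤ 1 - 2 * δ j :=
    le_one_sub_two_mul_of_mul_add_lt (by exact_mod_cast hw j) hδj (htight j hj hjp hδj)
  obtain ⟨m, rfl⟩ : ∃ m, p = m + 1 := by
    obtain ⟨l, hlp, -⟩ := h.exists_neg
    exact ⟨p - 1, by omega⟩
  have hpartial := sum_add_sum_max_le_max (ε := fun i => δ (i + 1)) (m := m)
    fun j hj hδj => hsucc (j + 1) (by omega) (by omega) hδj
  have hsum := h.sum_eq_zero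
  rw [Finset.sum_range_succ'] at hsum
  have hlast := hsucc (m + 1) (by omega) le_rfl h.pos
  rw [hp, h.cyclic] at hlast
  have hpos := h.pos
  have hnonneg (i : ℕ) (_ : i ∈ Finset.range m) : 0 ≤ max (δ (i + 1) - 1) 0 := le_max_right _ _
  have hexcess := Finset.sum_nonneg hnonneg
  refine ⟨by omega, by omega, fun j hj hjp => ?_⟩
  obtain ⟨i, rfl⟩ : ∃ i, j = i + 1 := ⟨j - 1, by omega⟩
  rcases Nat.lt_or_ge i m with him | him
  · have hi := Finset.single_le_sum hnonneg (Finset.mem_range.2 him)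
    omega
  · obtain rfl : i = m := by omega
    omega

theorem inf_cap_of_tight (hw : ∀ i, 2 ≤ w i) (h : Exchange n w c b δ p) (hp : p + 1 = n)
    (hδ0 : δ 0 < 0) (htight : ∀ j, 0 < j → j ≤ p → 0 < δ j → w j * δ j + δ (j + 1) < w j) :
    Exchange n w c (fun i => min (b i) (exchangeCap n w c i)) δ p := by
  obtain ⟨h0, hp1, hle⟩ := h.le_one_of_tight hw hp hδ0 htight
  obtain ⟨l, hlp, -⟩ := h.exists_neg
  have hc0 := h.pos_of_neg (by omega) hδ0
  refine ⟨h.lt, h.cyclic, h.sum_eq_zero, h.pos, h.eq_zero, h.nonneg, fun i hi => ?_⟩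
  suffices hcap : w i * δ i + δ (i + 1) ≤ exchangeCap n w c i by
    rw [Nat.cast_min]
    exact le_min (h.le i hi) hcap
  have hwi := hw i
  rcases Nat.eq_zero_or_pos i with rfl | hi0
  · have := hle 1 one_pos (by omega)
    rw [h0, zero_add]
    omega
  rw [exchangeCap_of_pos hc0 hi0]
  rcases eq_or_ne i p with rfl | hip
  · rw [hp1, hp, h.cyclic, h0]
    split_ifs <;> omega
  · rw [if_neg (by omega)]
    by_cases hδi : 0 < δ i
    · exact (htight i hi0 (by omega) hδi).le
    · have hmul : (w i : ℤ) * δ i ≤ 0 := mul_nonpos_of_nonneg_of_nonpos (by positivity) (by omega)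
      have := hle (i + 1) (by omega) (by omega)
      omega

/-- If some position leaves room for a swap, the swap respects the cap; otherwise the partial sums
of `δ` force `δ 0 = -1`, `δ p = 1` and `δ ≤ 1`, so that `δ` itself does. -/
theorem inf_cap (hw : ∀ i, 2 ≤ w i) (h : Exchange n w c b δ p) :
    Exchangeable n w c fun i => min (b i) (exchangeCap n w c i) := by
  have hw0 : ∀ i, 0 < w i := fun i => two_pos.trans_le (hw i)
  by_cases hroom : ∃ j ≤ p, 0 < δ j ∧ (w j : ℤ) ≤ w j * δ j + δ (j + 1) ∧ ∃ l < j, 0 < c l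
  · obtain ⟨j, hjp, hδj, hle, l, hlj, hl⟩ := hroom
    have hjn : j < n := hjp.trans_lt h.lt
    exact h.inf_cap_of_weight_le hw0 hjn hδj (by exact_mod_cast hle.trans (h.le j hjn)) hl hlj
  · push Not at hroom
    obtain ⟨l, hlp, hl⟩ := h.exists_neg
    have hsucc : δ (p + 1) < 0 := by
      by_contra! hnonneg
      have hmul : (w p : ℤ) ≤ w p * δ p := le_mul_of_one_le_right (by positivity) h.pos
      exact (h.pos_of_neg (hlp.trans h.lt) hl).ne'
        (Nat.le_zero.1 (hroom p le_rfl h.pos (by omega) l hlp))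
    have hp : p + 1 = n := by
      by_contra hne
      have := h.lt
      exact hsucc.ne (h.eq_zero (p + 1) (by omega) (by omega))
    have hδ0 : δ 0 < 0 := by rwa [hp, h.cyclic] at hsucc
    have hc0 := h.pos_of_neg (by omega) hδ0
    refine ⟨δ, p, h.inf_cap_of_tight hw hp hδ0 fun j hj hjp hδj => ?_⟩
    by_contra! hle
    exact hc0.ne' (Nat.le_zero.1 (hroom j hjp hδj hle 0 hj))

end Exchange

theorem Exchange.mono {b' : ℕ → ℕ} (h : Exchange n w c b δ p) (hb : ∀ i < n, b i ≤ b' i) :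
    Exchange n w c b' δ p :=
  { h with le := fun i hi => (h.le i hi).trans (by exact_mod_cast hb i hi) }

section DegreeBound

variable {f : ℕ}

/-- The summand at `i` of the defect `∑ (w i - 1) - ∑ b i - (w f - 1)`. -/
def capDefect (w b : ℕ → ℕ) (f i : ℕ) : ℤ :=
  w i - 1 - b i - if i = f then (w f : ℤ) - 1 else 0

theorem sum_capDefect (hf : f < n) :
    ∑ i ∈ Finset.range n, capDefect w b f i =
      ∑ i ∈ Finset.range n, ((w i : ℤ) - 1) - ∑ i ∈ Finset.range n, (b i : ℤ) - (w f - 1) := by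
  simp only [capDefect]
  rw [Finset.sum_sub_distrib, Finset.sum_sub_distrib, Finset.sum_ite_eq',
    if_pos (Finset.mem_range.2 hf)]

theorem eq_zero_of_eq_weight (hw : ∀ i, 0 < w i) (h : ¬Exchangeable n w c b) (hcf : 0 < c f)
    {i : ℕ} (hfi : f < i) (hi : i < n) (hbi : b i = w i) : b (i - 1) = 0 ∧ f < i - 1 := by
  have hc : ¬0 < c (i - 1) := fun hpos =>
    h (exchangeable_of_swap hw hpos (by omega) hi (Or.inl hbi.ge) (Or.inr (by omega)))
  refine ⟨?_, ?_⟩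
  · by_contra hne
    exact h (exchangeable_of_swap hw hcf hfi hi (Or.inl hbi.ge) (Or.inl (by omega)))
  · by_contra hle
    obtain rfl : i - 1 = f := by omega
    exact hc hcf

theorem eq_zero_of_le_exchangeCap (hb : ∀ i < n, b i ≤ exchangeCap n w c i) (hf0 : ∀ i < f, c i = 0)
    {i : ℕ} (hif : i ≤ f) (hi : i < n) : b i = 0 :=
  Nat.le_zero.1 <| (hb i hi).trans_eq <| exchangeCap_eq_zero fun l hl => hf0 l (hl.trans_le hif)

theorem capDefect_pos (hw : ∀ i, 2 ≤ w i) {i : ℕ} (hbi : b i = 0) (hif : i ≠ f) :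
    0 < capDefect w b f i := by
  have := hw i
  rw [capDefect, hbi, if_neg hif]
  omega

theorem capDefect_self (hbf : b f = 0) : capDefect w b f f = 0 := by
  rw [capDefect, hbf, if_pos rfl]
  omega

theorem capDefect_succ (hw : ∀ i, 2 ≤ w i) (h : ¬Exchangeable n w c b)
    (hb : ∀ i < n, b i ≤ exchangeCap n w c i) (hcf : 0 < c f) (hf0 : ∀ i < f, c i = 0)
    {i : ℕ} (hi : i + 1 < n) :
    0 ≤ capDefect w b f (i + 1) ∨ capDefect w b f (i + 1) = -1 ∧ 0 < capDefect w b f i := by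
  have hbw := (hb (i + 1) hi).trans (exchangeCap_le n w c (i + 1))
  rcases lt_trichotomy (i + 1) f with hif | rfl | hfi
  · exact Or.inl (capDefect_pos hw (eq_zero_of_le_exchangeCap hb hf0 hif.le hi) hif.ne).le
  · exact Or.inl (capDefect_self (eq_zero_of_le_exchangeCap hb hf0 le_rfl hi)).ge
  · rw [capDefect, if_neg hfi.ne']
    rcases hbw.lt_or_eq with hlt | heq
    · omega
    · obtain ⟨hbi, hfi'⟩ :=
        eq_zero_of_eq_weight (fun i => two_pos.trans_le (hw i)) h hcf hfi hi heq
      exact Or.inr ⟨by omega, capDefect_pos hw hbi hfi'.ne'⟩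

theorem last_lt_weight (hw : ∀ i, 0 < w i) {m : ℕ} (h : ¬Exchangeable (m + 2) w c b)
    (hb : b (m + 1) ≤ exchangeCap (m + 2) w c (m + 1)) (hc0 : 0 < c 0) :
    b (m + 1) < w (m + 1) := by
  have hwm := hw (m + 1)
  rw [exchangeCap_of_pos (i := m + 1) hc0 m.succ_pos] at hb
  by_contra! hle
  refine h (exchangeable_of_swap (l := m) (p := m + 1) hw ?_ m.lt_succ_self (m + 1).lt_succ_self
    (Or.inl hle) (Or.inr rfl))
  by_contra! hcm
  rw [if_pos ⟨rfl, hc0, Nat.le_zero.1 hcm⟩] at hb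
  omega

theorem sum_capDefect_pos_of_pos (hw : ∀ i, 2 ≤ w i) (h : ¬Exchangeable n w c b)
    (hb : ∀ i < n, b i ≤ exchangeCap n w c i) (hcf : 0 < c f) (hf0 : ∀ i < f, c i = 0)
    (hf : f < n) (hfpos : 0 < f) : 0 < ∑ i ∈ Finset.range n, capDefect w b f i := by
  obtain ⟨m, rfl⟩ : ∃ m, n = m + 2 := ⟨n - 2, by omega⟩
  have hstep {i : ℕ} := capDefect_succ (i := i) hw h hb hcf hf0
  have h0 := capDefect_pos hw (eq_zero_of_le_exchangeCap hb hf0 hfpos.le (by omega)) hfpos.ne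
  have h1 : 0 ≤ capDefect w b f 1 := by
    have hb1 := eq_zero_of_le_exchangeCap hb hf0 (i := 1) hfpos (by omega)
    rcases eq_or_ne 1 f with rfl | hf1
    · exact (capDefect_self hb1).ge
    · exact (capDefect_pos hw hb1 hf1).le
  have hle := max_le_sum (u := fun i => capDefect w b f (i + 1)) h1
    fun j (hj : j < m) => hstep (by omega)
  rw [Finset.sum_range_succ']
  omega

theorem sum_capDefect_zero_pos (hw : ∀ i, 2 ≤ w i) (h : ¬Exchangeable n w c b)
    (hb : ∀ i < n, b i ≤ exchangeCap n w c i) (hc0 : 0 < c 0) (hn : 2 ≤ n) :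
    0 < ∑ i ∈ Finset.range n, capDefect w b 0 i := by
  obtain ⟨m, rfl⟩ : ∃ m, n = m + 2 := ⟨n - 2, by omega⟩
  have hw0 (i : ℕ) : 0 < w i := two_pos.trans_le (hw i)
  have hf0 : ∀ i < 0, c i = 0 := fun i hi => absurd hi i.not_lt_zero
  have hstep {i : ℕ} := capDefect_succ (i := i) hw h hb hc0 hf0
  have h0 := (capDefect_self (w := w) (eq_zero_of_le_exchangeCap hb hf0 le_rfl (by omega))).ge
  have hlast := last_lt_weight hw0 h (hb (m + 1) (by omega)) hc0
  have hdef : capDefect w b 0 (m + 1) = w (m + 1) - 1 - b (m + 1) := by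
    rw [capDefect, if_neg m.succ_ne_zero, sub_zero]
  by_cases hroom : b (m + 1) + 2 ≤ w (m + 1)
  · have hle : _ ≤ ∑ i ∈ Finset.range (m + 2), _ :=
      max_le_sum (m := m + 1) h0 fun j hj => hstep (by omega)
    omega
  · have hm : b m = 0 ∧ m ≠ 0 := by
      by_contra hcon
      refine h (exchangeable_of_swap (p := m + 1) hw0 hc0 m.succ_pos (m + 1).lt_succ_self
        (Or.inr ⟨by omega, rfl, rfl⟩) ?_)
      rw [Nat.add_sub_cancel]
      omega
    have hpos := capDefect_pos hw hm.1 hm.2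
    have hle := max_le_sum (m := m) h0 fun j hj => hstep (by omega)
    rw [Finset.sum_range_succ]
    omega

theorem sum_add_weight_le (hw : ∀ i, 2 ≤ w i) (h : ¬Exchangeable n w c b)
    (hb : ∀ i < n, b i ≤ exchangeCap n w c i) (hn : 2 ≤ n) (hf : f < n) (hcf : 0 < c f)
    (hf0 : ∀ i < f, c i = 0) :
    ∑ i ∈ Finset.range n, b i + w f ≤ ∑ i ∈ Finset.range n, (w i - 1) := by
  have hpos : 0 < ∑ i ∈ Finset.range n, capDefect w b f i := by
    rcases Nat.eq_zero_or_pos f with rfl | hfpos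
    · exact sum_capDefect_zero_pos hw h hb hcf hn
    · exact sum_capDefect_pos_of_pos hw h hb hcf hf0 hf hfpos
  rw [sum_capDefect hf] at hpos
  have hcast : ((∑ i ∈ Finset.range n, (w i - 1) : ℕ) : ℤ) =
      ∑ i ∈ Finset.range n, ((w i : ℤ) - 1) := by
    rw [Nat.cast_sum]
    exact Finset.sum_congr rfl fun i _ => Nat.cast_pred (two_pos.trans_le (hw i))
  suffices hle : ((∑ i ∈ Finset.range n, b i : ℕ) : ℤ) + w f ≤
      (∑ i ∈ Finset.range n, (w i - 1) : ℕ) by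
    exact_mod_cast hle
  rw [hcast, Nat.cast_sum]
  omega

end DegreeBound

end Exchanges

section Unroll

variable {n : ℕ} [NeZero n] {α : Type*}

/-- The `n`-periodic sequence with the values of `f`. -/
def unroll (f : Fin n → α) (i : ℕ) : α :=
  f (Fin.ofNat n i)

theorem unroll_val (f : Fin n → α) (i : Fin n) : unroll f i.val = f i :=
  congrArg f (Fin.ext (Nat.mod_eq_of_lt i.2))

theorem unroll_val_succ (f : Fin n → α) (i : Fin n) : unroll f (i.val + 1) = f (i + 1) :=
  congrArg f (Fin.ext (by simp [Fin.val_add]))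

theorem unroll_self (f : Fin n → α) : unroll f n = unroll f 0 :=
  congrArg f (Fin.ext (by simp))

theorem sum_range_unroll [AddCommMonoid α] (f : Fin n → α) :
    ∑ i ∈ Finset.range n, unroll f i = ∑ i, f i := by
  rw [← Fin.sum_univ_eq_sum_range]
  exact Finset.sum_congr rfl fun i _ => unroll_val f i

theorem val_add_one_of_cyclic {g : ℕ → α} (hg : g n = g 0) (i : Fin n) :
    g (i + 1 : Fin n).val = g (i.val + 1) := by
  rw [Fin.val_add, Fin.val_one', Nat.add_mod_mod]
  rcases (Nat.succ_le_iff.2 i.2).lt_or_eq with hi | hi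
  · rw [Nat.mod_eq_of_lt hi]
  · rw [← Nat.succ_eq_add_one, hi, Nat.mod_self, hg]

theorem add_one_ne_self (hn : 2 ≤ n) (i : Fin n) : i + 1 ≠ i := by
  have := Fin.nontrivial_iff_two_le.2 hn
  rw [Ne, add_eq_left, Fin.ext_iff, Fin.val_one', Nat.mod_eq_of_lt hn]
  exact one_ne_zero

end Unroll

section Multiplicities

variable {ι : Type*} [DecidableEq ι]

theorem exists_eq_add_single {c : ι → ℕ} {i : ι} (hi : 0 < c i) :
    ∃ c' : ι → ℕ, c = c' + Pi.single i 1 := by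
  refine ⟨c - Pi.single i 1, (tsub_add_cancel_of_le fun j => ?_).symm⟩
  rcases eq_or_ne j i with rfl | hj
  · rwa [Pi.single_eq_same]
  · rw [Pi.single_eq_of_ne hj]
    exact Nat.zero_le _

theorem sum_add_single [Fintype ι] (c : ι → ℕ) (i : ι) (d : ℕ) :
    ∑ j, (c + Pi.single i d : ι → ℕ) j = ∑ j, c j + d := by
  simp only [Pi.add_apply, Finset.sum_add_distrib, Fintype.sum_pi_single']

theorem exists_first_pos {ι : Type*} [Fintype ι] [LinearOrder ι] {c : ι → ℕ} (hc : ∑ i, c i ≠ 0) :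
    ∃ f, 0 < c f ∧ ∀ i < f, c i = 0 := by
  obtain ⟨i, -, hi⟩ := Finset.exists_ne_zero_of_sum_ne_zero hc
  obtain ⟨f, hf, hmin⟩ := wellFounded_lt.has_min {i | c i ≠ 0} ⟨i, hi⟩
  exact ⟨f, Nat.pos_of_ne_zero hf, fun i hif => not_not.1 fun hne => hmin i hne hif⟩

end Multiplicities

section CycleExponents

variable {n : ℕ} [NeZero n] {w c : Fin n → ℕ} {t : ℕ}

/-- The exponent vector of the product of the generators `L_i` with multiplicities `c i`. -/
def cycExponent (w c : Fin n → ℕ) : Fin n →₀ ℕ :=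
  ∑ i, c i • cycE n w i

theorem cycE_apply (w : Fin n → ℕ) (i j : Fin n) :
    cycE n w i j = (if j + 1 = i then 1 else 0) + (if i = j then w j else 0) := by
  rw [cycE, Finsupp.add_apply, Finsupp.single_apply, Finsupp.single_apply]
  congr 1
  · simp only [sub_eq_iff_eq_add, eq_comm (a := i)]
  · split_ifs with h
    · rw [h]
    · rfl

theorem cycExponent_apply (w c : Fin n → ℕ) (j : Fin n) :
    cycExponent w c j = w j * c j + c (j + 1) := by
  rw [cycExponent, Finsupp.finsetSum_apply]
  simp only [Finsupp.smul_apply, cycE_apply, smul_eq_mul, mul_add, Finset.sum_add_distrib, mul_ite,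
    mul_one, mul_zero, Finset.sum_ite_eq, Finset.sum_ite_eq', Finset.mem_univ, if_true]
  ring

theorem cycExponent_add (w c c' : Fin n → ℕ) :
    cycExponent w (c + c') = cycExponent w c + cycExponent w c' := by
  simp only [cycExponent, Pi.add_apply, add_smul, Finset.sum_add_distrib]

theorem cycExponent_single (w : Fin n → ℕ) (i : Fin n) (d : ℕ) :
    cycExponent w (Pi.single i d) = d • cycE n w i := by
  rw [cycExponent, Fintype.sum_eq_single i fun j hj => by rw [Pi.single_eq_of_ne hj, zero_smul],
    Pi.single_eq_same]

theorem cycExponent_add_single (w c : Fin n → ℕ) (i : Fin n) :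
    cycExponent w (c + Pi.single i 1) = cycExponent w c + cycE n w i := by
  rw [cycExponent_add, cycExponent_single, one_smul]

theorem degree_cycE (w : Fin n → ℕ) (i : Fin n) : (cycE n w i).degree = w i + 1 := by
  rw [cycE, map_add, Finsupp.degree_single, Finsupp.degree_single, add_comm]

theorem degree_cycExponent (w c : Fin n → ℕ) :
    (cycExponent w c).degree = ∑ i, c i * (w i + 1) := by
  simp only [cycExponent, map_sum, map_nsmul, degree_cycE, smul_eq_mul]

theorem degree_cycExponent_le {f : Fin n} (hf : 0 < c f) {W : ℕ} (hW : ∀ i, w i ≤ W) :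
    (cycExponent w c).degree ≤ (w f + 1) + (∑ i, c i - 1) * (W + 1) := by
  obtain ⟨c', rfl⟩ := exists_eq_add_single hf
  rw [sum_add_single, Nat.add_sub_cancel, cycExponent_add_single, map_add,
    degree_cycE, degree_cycExponent, Finset.sum_mul, add_comm]
  gcongr with i
  exact hW i

/-- The exponent vectors of the monomials in the `t`-th power of the edge ideal. -/
def powExponents (w : Fin n → ℕ) (t : ℕ) : Set (Fin n →₀ ℕ) :=
  {a | ∃ c : Fin n → ℕ, ∑ i, c i = t ∧ cycExponent w c ≤ a}

theorem isUpperSet_powExponents (w : Fin n → ℕ) (t : ℕ) : IsUpperSet (powExponents w t) :=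
  fun _ _ hab ⟨c, hc, hle⟩ => ⟨c, hc, hle.trans hab⟩

theorem exists_sum_eq_succ_iff {a : Fin n →₀ ℕ} :
    (∃ c : Fin n → ℕ, ∑ i, c i = t + 1 ∧ cycExponent w c = a) ↔
      ∃ c : Fin n → ℕ, ∑ i, c i = t ∧ ∃ i, cycExponent w c + cycE n w i = a := by
  constructor
  · rintro ⟨c, hc, rfl⟩
    obtain ⟨i, -, hi⟩ := Finset.exists_ne_zero_of_sum_ne_zero (hc.trans_ne t.succ_ne_zero)
    obtain ⟨c', rfl⟩ := exists_eq_add_single (Nat.pos_of_ne_zero hi)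
    rw [sum_add_single] at hc
    exact ⟨c', Nat.succ_injective hc, i, (cycExponent_add_single w c' i).symm⟩
  · rintro ⟨c, rfl, i, rfl⟩
    exact ⟨c + Pi.single i 1, sum_add_single c i 1, cycExponent_add_single w c i⟩

theorem cycIdeal_pow_eq_span (k : Type) [Field k] (w : Fin n → ℕ) (t : ℕ) :
    cycIdeal k n w ^ t = Ideal.span ((fun a => monomial a (1 : k)) ''
      {a | ∃ c : Fin n → ℕ, ∑ i, c i = t ∧ cycExponent w c = a}) := by
  induction t with
  | zero =>
    rw [pow_zero, Ideal.one_eq_top, eq_comm, Ideal.eq_top_iff_one]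
    exact Ideal.subset_span ⟨0, ⟨0, by simp, by simp [cycExponent]⟩, by simp⟩
  | succ t ih =>
    rw [pow_succ, ih, cycIdeal, Ideal.span_mul_span']
    congr 1
    ext p
    simp only [exists_sum_eq_succ_iff]
    constructor
    · rintro ⟨_, ⟨_, ⟨c, hc, rfl⟩, rfl⟩, _, ⟨i, rfl⟩, rfl⟩
      exact ⟨_, ⟨c, hc, i, rfl⟩, by simp only [cycL, monomial_mul, one_mul]⟩
    · rintro ⟨_, ⟨c, hc, i, rfl⟩, rfl⟩
      exact ⟨_, ⟨_, ⟨c, hc, rfl⟩, rfl⟩, _, ⟨i, rfl⟩, by simp only [cycL, monomial_mul, one_mul]⟩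

theorem cycIdeal_pow (k : Type) [Field k] (w : Fin n → ℕ) (t : ℕ) :
    cycIdeal k n w ^ t =
      restrictSupportIdeal k (powExponents w t) (isUpperSet_powExponents w t) := by
  ext p
  rw [cycIdeal_pow_eq_span, mem_ideal_span_monomial_image, mem_restrictSupportIdeal_iff]
  simp only [mem_support_iff]
  refine forall_congr' fun s => imp_congr_right fun _ => ⟨?_, ?_⟩
  · rintro ⟨_, ⟨c, hc, rfl⟩, hle⟩
    exact ⟨c, hc, hle⟩
  · rintro ⟨c, hc, hle⟩
    exact ⟨_, ⟨c, hc, rfl⟩, hle⟩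

end CycleExponents

section UpperBound

variable {n : ℕ} [NeZero n] {w c : Fin n → ℕ} {b : Fin n →₀ ℕ} {t : ℕ}

theorem Exchange.exists_toColex_lt {δ : ℕ → ℤ} {p : ℕ}
    (h : Exchange n (unroll w) (unroll c) (unroll b) δ p) :
    ∃ c' : Fin n → ℕ, ∑ i, c' i = ∑ i, c i ∧ toColex c < toColex c' ∧
      cycExponent w c' ≤ b + cycExponent w c := by
  have hnonneg (i : Fin n) : 0 ≤ c i + δ i := by
    simpa only [unroll_val] using h.nonneg i i.2
  choose c' hc' using fun i => Int.eq_ofNat_of_zero_le (hnonneg i)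
  have hsum : ∑ i : Fin n, δ i = 0 := by
    rw [Fin.sum_univ_eq_sum_range, ← h.sum_eq_zero]
    refine (Finset.sum_subset (Finset.range_mono h.lt) fun i hi hip => ?_).symm
    rw [Finset.mem_range] at hi hip
    exact h.eq_zero i (by omega) hi
  refine ⟨c', ?_, ⟨⟨p, h.lt⟩, fun j hj => ?_, ?_⟩, fun i => ?_⟩
  · zify
    rw [← Finset.sum_congr rfl fun i _ => hc' i, Finset.sum_add_distrib, hsum, add_zero]
  · have hj0 := h.eq_zero j hj j.2
    have := hc' j
    change c j = c' j
    omega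
  · have hpos := h.pos
    have : (c ⟨p, h.lt⟩ : ℤ) + δ p = c' ⟨p, h.lt⟩ := hc' ⟨p, h.lt⟩
    change c ⟨p, h.lt⟩ < c' ⟨p, h.lt⟩
    omega
  · have hle := h.le i i.2
    rw [unroll_val, unroll_val, ← val_add_one_of_cyclic h.cyclic] at hle
    rw [Finsupp.add_apply, cycExponent_apply, cycExponent_apply]
    zify
    rw [← hc', ← hc']
    linarith

theorem exchange_of_toColex_lt {c' : Fin n → ℕ} (hsum : ∑ i, c' i = ∑ i, c i)
    (hle : cycExponent w c' ≤ b + cycExponent w c) {p : Fin n} (hp : c p < c' p)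
    (heq : ∀ j, p < j → c j = c' j) :
    Exchange n (unroll w) (unroll c) (unroll b) (unroll fun i => (c' i : ℤ) - c i) p where
  lt := p.2
  cyclic := unroll_self _
  sum_eq_zero := by
    rw [Finset.sum_subset (Finset.range_mono p.2) fun i hi hip => ?_, sum_range_unroll,
      Finset.sum_sub_distrib, ← Nat.cast_sum, ← Nat.cast_sum, hsum, sub_self]
    rw [Finset.mem_range] at hi hip
    have hpi : p.val < i := by omega
    rw [← Fin.val_mk hi, unroll_val, ← heq ⟨i, hi⟩ hpi, sub_self]
  pos := by
    rw [unroll_val]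
    omega
  eq_zero i hpi hi := by
    rw [← Fin.val_mk hi, unroll_val, ← heq ⟨i, hi⟩ hpi, sub_self]
  nonneg i hi := by
    rw [← Fin.val_mk hi, unroll_val, unroll_val]
    omega
  le i hi := by
    have hlei := hle ⟨i, hi⟩
    rw [Finsupp.add_apply, cycExponent_apply, cycExponent_apply] at hlei
    rw [← Fin.val_mk hi, unroll_val, unroll_val, unroll_val, unroll_val_succ]
    zify at hlei
    linarith

theorem exchangeable_unroll_iff :
    Exchangeable n (unroll w) (unroll c) (unroll b) ↔
      ∃ c' : Fin n → ℕ, ∑ i, c' i = ∑ i, c i ∧ toColex c < toColex c' ∧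
        cycExponent w c' ≤ b + cycExponent w c :=
  ⟨fun ⟨_, _, h⟩ => h.exists_toColex_lt,
    fun ⟨_, hsum, ⟨_, heq, hp⟩, hle⟩ => ⟨_, _, exchange_of_toColex_lt hsum hle hp heq⟩⟩

theorem monomialRegLE_colon (k : Type) [CommRing k] (hn : 2 ≤ n) (hw : ∀ i, 2 ≤ w i) {f : Fin n}
    (hf : 0 < c f) (hf0 : ∀ i < f, c i = 0) :
    MonomialRegLE k {b : Fin n →₀ ℕ | ∃ c' : Fin n → ℕ, ∑ i, c' i = ∑ i, c i ∧
      toColex c < toColex c' ∧ cycExponent w c' ≤ b + cycExponent w c}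
      (∑ i, (w i - 1) - w f + 1) := by
  simp only [← exchangeable_unroll_iff]
  let q : Fin n →₀ ℕ :=
    Finsupp.equivFunOnFinite.symm fun i => exchangeCap n (unroll w) (unroll c) i.val
  refine monomialRegLE_of_degree_lt ?_ q ?_ ?_
  · rintro a b hab ⟨δ, p, h⟩
    exact ⟨δ, p, h.mono fun i _ => hab _⟩
  · rintro a ⟨δ, p, h⟩
    obtain ⟨δ', p', h'⟩ := h.inf_cap fun i => hw _
    refine ⟨δ', p', h'.mono fun i hi => ?_⟩
    rw [← Fin.val_mk hi, unroll_val, unroll_val]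
    rfl
  · intro a ha haq
    have hle := sum_add_weight_le (w := unroll w) (c := unroll c) (b := unroll a) (f := f)
      (fun i => hw _) ha ?_ hn f.2 ?_ ?_
    · have hw1 : ∑ i ∈ Finset.range n, (unroll w i - 1) = ∑ i, (w i - 1) :=
        sum_range_unroll fun i => w i - 1
      rw [sum_range_unroll, unroll_val, hw1] at hle
      rw [Finsupp.degree_eq_sum]
      omega
    · intro i hi
      rw [← Fin.val_mk hi, unroll_val]
      exact haq ⟨i, hi⟩
    · rwa [unroll_val]
    · intro i hi
      rw [← Fin.val_mk (hi.trans f.2), unroll_val]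
      exact hf0 _ hi

theorem le_sum_sub_one (hn : 2 ≤ n) (hw : ∀ i, 2 ≤ w i) (f : Fin n) : w f ≤ ∑ i, (w i - 1) := by
  have hne := add_one_ne_self hn f
  calc w f ≤ (w f - 1) + (w (f + 1) - 1) := by
        have := hw f
        have := hw (f + 1)
        omega
    _ = ∑ i ∈ {f, f + 1}, (w i - 1) := (Finset.sum_pair (f := fun i => w i - 1) hne.symm).symm
    _ ≤ ∑ i, (w i - 1) := Finset.sum_le_univ_sum_of_nonneg fun _ => Nat.zero_le _

theorem monomialRegLE_powExponents (k : Type) [CommRing k] (hn : 2 ≤ n) (hw : ∀ i, 2 ≤ w i)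
    (ht : t ≠ 0) {W : ℕ} (hW : ∀ i, w i ≤ W) :
    MonomialRegLE k (powExponents w t) (∑ i, (w i - 1) + (t - 1) * (W + 1) + 1) := by
  let s : Finset (Colex (Fin n → ℕ)) :=
    (Finset.piAntidiag Finset.univ t).map toColex.toEmbedding
  have hs (c : Colex (Fin n → ℕ)) : c ∈ s ↔ ∑ i, ofColex c i = t := by
    simp only [s, Finset.mem_map_equiv, Finset.mem_piAntidiag, Finset.mem_univ, implies_true,
      and_true, toColex_symm_eq]
  have hfirst (c : Colex (Fin n → ℕ)) (hc : c ∈ s) :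
      ∃ f, (0 < ofColex c f ∧ ∀ i < f, ofColex c i = 0) ∧ w f ≤ ∑ i, (w i - 1) ∧
        (cycExponent w (ofColex c)).degree ≤ (w f + 1) + (t - 1) * (W + 1) := by
    obtain ⟨f, hf, hf0⟩ := exists_first_pos (((hs c).1 hc).trans_ne ht)
    exact ⟨f, ⟨hf, hf0⟩, le_sum_sub_one hn hw f, (hs c).1 hc ▸ degree_cycExponent_le hf hW⟩
  have hpow : powExponents w t = {a | ∃ c ∈ s, cycExponent w (ofColex c) ≤ a} :=
    Set.ext fun a => exists_congr fun c => and_congr_left fun _ => (hs (toColex c)).symm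
  rw [hpow]
  refine monomialRegLE_of_colon s (fun c => cycExponent w (ofColex c)) (fun c hc => ?_)
    fun c hc => ?_
  · obtain ⟨f, -, hwf, hdeg⟩ := hfirst c hc
    omega
  · obtain ⟨f, ⟨hf, hf0⟩, hwf, hdeg⟩ := hfirst c hc
    refine ⟨∑ i, (w i - 1) - w f + 1, by omega, ?_⟩
    have hcolon := monomialRegLE_colon k hn hw hf hf0
    rw [(hs c).1 hc] at hcolon
    convert hcolon using 1
    exact Set.ext fun b => exists_congr fun c' => and_congr_left fun _ => hs (toColex c')

end UpperBound

section Socle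

variable {n : ℕ} [NeZero n] {w c : Fin n → ℕ} {m : Fin n} {d : ℕ}

/-- The exponent vector of `(∏ i, x_i ^ (w i - 1)) * L_m ^ d`, whose class is a socle element modulo
the power `d + 1` of the edge ideal. -/
def socleExponent (w : Fin n → ℕ) (m : Fin n) (d : ℕ) : Fin n →₀ ℕ :=
  Finsupp.equivFunOnFinite.symm (fun i => w i - 1) + d • cycE n w m

theorem socleExponent_apply (w : Fin n → ℕ) (m : Fin n) (d : ℕ) (i : Fin n) :
    socleExponent w m d i = w i - 1 + d * cycE n w m i :=
  rfl

theorem degree_socleExponent (w : Fin n → ℕ) (m : Fin n) (d : ℕ) :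
    (socleExponent w m d).degree = ∑ i, (w i - 1) + d * (w m + 1) := by
  rw [socleExponent, map_add, map_nsmul, degree_cycE, Finsupp.degree_eq_sum]
  rfl

theorem socleExponent_add_single_mem (hn : 2 ≤ n) (hw : ∀ i, 2 ≤ w i) (m : Fin n) (d : ℕ)
    (i : Fin n) : socleExponent w m d + Finsupp.single i 1 ∈ powExponents w (d + 1) := by
  refine ⟨Pi.single m d + Pi.single i 1, ?_, fun j => ?_⟩
  · rw [sum_add_single, Fintype.sum_pi_single']
  · have hgen : cycE n w i j ≤ w j - 1 + Finsupp.single i 1 j := by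
      have hwj := hw j
      have hne := add_one_ne_self hn j
      rw [cycE_apply, Finsupp.single_apply]
      rcases eq_or_ne i j with rfl | hij
      · rw [if_neg hne, if_pos rfl, if_pos rfl]
        omega
      · rw [if_neg hij, if_neg hij]
        split_ifs <;> omega
    rw [cycExponent_add_single, cycExponent_single, Finsupp.add_apply, Finsupp.add_apply,
      socleExponent_apply, Finsupp.smul_apply, smul_eq_mul]
    omega

theorem sum_eq_of_cycExponent_le (hn : 2 ≤ n) (hw : ∀ i, 0 < w i)
    (h : cycExponent w c ≤ socleExponent w m d) : ∑ i, c i = c m + c (m - 1) := by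
  have hne : m ≠ m - 1 := fun heq => add_one_ne_self hn m (eq_sub_iff_add_eq.1 heq)
  refine Fintype.sum_eq_add m (m - 1) hne fun j ⟨hjm, hjm'⟩ => ?_
  have hj := h j
  rw [cycExponent_apply, socleExponent_apply, cycE_apply,
    if_neg fun heq => hjm' (eq_sub_of_add_eq heq), if_neg hjm.symm] at hj
  by_contra hpos
  have hmul := Nat.le_mul_of_pos_right (w j) (Nat.pos_of_ne_zero hpos)
  have hwj := hw j
  omega

theorem le_of_cycExponent_le (hn : 2 ≤ n) (hw : 0 < w m)
    (h : cycExponent w c ≤ socleExponent w m d) : c m ≤ d := by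
  have hm := h m
  rw [cycExponent_apply, socleExponent_apply, cycE_apply, if_neg (add_one_ne_self hn m),
    if_pos rfl, zero_add] at hm
  by_contra! hlt
  have hmul : w m * (d + 1) ≤ w m * c m := Nat.mul_le_mul_left _ hlt
  rw [mul_add, mul_comm (w m) d] at hmul
  omega

theorem socleExponent_notMem (hn : 2 ≤ n) (hw : ∀ i, 2 ≤ w i) (m : Fin n) (d : ℕ) :
    socleExponent w m d ∉ powExponents w (d + 1) := by
  rintro ⟨c, hc, hle⟩
  have hw0 (i : Fin n) : 0 < w i := two_pos.trans_le (hw i)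
  rw [sum_eq_of_cycExponent_le hn hw0 hle] at hc
  have hcm := le_of_cycExponent_le hn (hw0 m) hle
  have hne : m ≠ m - 1 := fun heq => add_one_ne_self hn m (eq_sub_iff_add_eq.1 heq)
  have hprev := hle (m - 1)
  rw [cycExponent_apply, socleExponent_apply, cycE_apply, sub_add_cancel, if_pos rfl,
    if_neg hne] at hprev
  obtain ⟨e, he⟩ : ∃ e, c (m - 1) = e + 1 := ⟨c (m - 1) - 1, by omega⟩
  have hmul : 2 * e ≤ w (m - 1) * e := Nat.mul_le_mul_right _ (hw (m - 1))
  have hwm := hw (m - 1)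
  rw [he, mul_add] at hprev
  omega

theorem reg_cycIdeal_pow (k : Type) [Field k] (hn : 2 ≤ n) (hw : ∀ i, 2 ≤ w i) (d : ℕ) :
    reg k (Fin n) (cycIdeal k n w ^ (d + 1)) =
      ∑ i, (w i - 1) + d * (Finset.univ.sup w + 1) + 1 := by
  obtain ⟨m, -, hm⟩ := Finset.exists_mem_eq_sup Finset.univ Finset.univ_nonempty w
  obtain ⟨hU, l, hreg⟩ := monomialRegLE_powExponents k hn hw d.succ_ne_zero
    fun i => hm ▸ Finset.le_sup (Finset.mem_univ i)
  rw [cycIdeal_pow, hm]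
  refine reg_eq_of_socle (by omega)
    (homogeneousComponent_mem_restrictSupportIdeal (isUpperSet_powExponents w (d + 1))) hreg
    (p := monomial (socleExponent w m d) 1) ?_ (fun i => ?_) ?_
  · exact fun hmem => socleExponent_notMem hn hw m d
      (((monomial_mem_restrictSupport k).1 hmem).resolve_right one_ne_zero)
  · rw [X, monomial_mul, add_comm (Finsupp.single i 1)]
    exact (monomial_mem_restrictSupport k).2 (Or.inl (socleExponent_add_single_mem hn hw m d i))
  · exact isHomogeneous_monomial 1 (degree_socleExponent w m d)

end Socle

/-- for the vertex-weighted oriented `n`-cycle with all weights at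
least `2`, `reg (I(C_n)^t) = reg (I(C_n)) + (t-1)(w+1)` for all `t ≥ 1`, where `w`
is the largest weight. -/
theorem reg_power_cycle_eq_reg_add
    (hn : 3 ≤ n) (w : Fin n → ℕ) (hw : ∀ i, 2 ≤ w i) (t : ℕ) (ht : 1 ≤ t) :
    reg k (Fin n) ((cycIdeal k n w) ^ t) =
      reg k (Fin n) (cycIdeal k n w) + (t - 1) * (Finset.univ.sup w + 1) := by
  have hpow (d : ℕ) := reg_cycIdeal_pow k (by omega : 2 ≤ n) hw d
  have hbase := hpow 0
  rw [zero_add, pow_one, zero_mul, add_zero] at hbase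
  obtain ⟨d, rfl⟩ := Nat.exists_eq_add_of_le' ht
  rw [hpow, hbase, Nat.add_sub_cancel]
  ring

end PaperReg
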